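/- arXiv:1602.05738 — 3 statements merged into one kernel-verified Lean document; each statement's English description precedes it below -/
import Mathlib

section
/- Let (X, μ) be a probability space with a measure-preserving ℤ²-action, let f ∈ L^∞(X) be an integer-valued function, and let p ∈ Ann(f). If n_p denotes the product of all primes less than ‖p‖·‖f‖_∞ + 1, then p^{(r)} ∈ Ann(f) whenever r ≡ 1 (mod n_p) with r ≥ 1. -/
open MeasureTheory

/-- The action of a Laurent polynomial `p = Σ c_g u^g ∈ ℤ[u₁^±, u₂^±]` on a function
`f : X → ℝ`, relative to a `ℤ²`-action `T` on `X` : `(p · f)(x) = Σ c_g f(g⁻¹ · x)`. -/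
noncomputable def polyAct {X : Type*} (T : ℤ × ℤ → X → X)
    (p : AddMonoidAlgebra ℤ (ℤ × ℤ)) (f : X → ℝ) : X → ℝ :=
  fun x => Finsupp.sum p.coeff fun g c => (c : ℝ) * f (T (-g) x)

section Helpers

variable {X : Type*} (T : ℤ × ℤ → X → X)

theorem polyAct_zero (f : X → ℝ) : polyAct T 0 f = 0 := by
  funext x
  simp [polyAct]

theorem polyAct_add (p q : AddMonoidAlgebra ℤ (ℤ × ℤ)) (f : X → ℝ) :
    polyAct T (p + q) f = polyAct T p f + polyAct T q f := by
  funext x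
  simp only [polyAct, AddMonoidAlgebra.coeff_add, Pi.add_apply]
  apply Finsupp.sum_add_index'
  · intro a; simp
  · intro a b c; push_cast; ring

theorem polyAct_single (g : ℤ × ℤ) (c : ℤ) (f : X → ℝ) (x : X) :
    polyAct T (AddMonoidAlgebra.single g c) f x = (c : ℝ) * f (T (-g) x) := by
  simp [polyAct]

theorem polyAct_nsmul (n : ℕ) (p : AddMonoidAlgebra ℤ (ℤ × ℤ)) (f : X → ℝ) (x : X) :
    polyAct T (n • p) f x = (n : ℝ) * polyAct T p f x := by
  induction n with
  | zero => simp [polyAct_zero]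
  | succ n ih => rw [succ_nsmul, polyAct_add, Pi.add_apply, ih]; push_cast; ring

theorem polyAct_single_mul (hTadd : ∀ g h : ℤ × ℤ, T (g + h) = T g ∘ T h)
    (g : ℤ × ℤ) (c : ℤ) (q : AddMonoidAlgebra ℤ (ℤ × ℤ)) (f : X → ℝ) (x : X) :
    polyAct T (AddMonoidAlgebra.single g c * q) f x = (c : ℝ) * polyAct T q f (T (-g) x) := by
  induction q using AddMonoidAlgebra.induction_linear with
  | zero => simp [polyAct_zero]
  | add a b ha hb => rw [mul_add, polyAct_add, polyAct_add, Pi.add_apply, Pi.add_apply, ha, hb]; ring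
  | single h d =>
    rw [AddMonoidAlgebra.single_mul_single, polyAct_single, polyAct_single, neg_add_rev, hTadd]
    push_cast
    simp only [Function.comp_apply]
    ring

theorem polyAct_mul_ae [MeasurableSpace X] (μ : Measure X)
    (hmp : ∀ g, MeasurePreserving (T g) μ μ)
    (hTadd : ∀ g h : ℤ × ℤ, T (g + h) = T g ∘ T h)
    (p q : AddMonoidAlgebra ℤ (ℤ × ℤ)) (f : X → ℝ)
    (hq : ∀ᵐ x ∂μ, polyAct T q f x = 0) :
    ∀ᵐ x ∂μ, polyAct T (p * q) f x = 0 := by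
  induction p using AddMonoidAlgebra.induction_linear with
  | zero => simp [polyAct_zero]
  | add a b ha hb =>
    filter_upwards [ha, hb] with x h1 h2
    rw [add_mul, polyAct_add, Pi.add_apply, h1, h2, add_zero]
  | single g c =>
    filter_upwards [(hmp (-g)).quasiMeasurePreserving.ae hq] with x hx
    rw [polyAct_single_mul T hTadd, hx, mul_zero]

theorem polyAct_int_ae [MeasurableSpace X] (μ : Measure X)
    (hmp : ∀ g, MeasurePreserving (T g) μ μ)
    (f : X → ℝ) (hfint : ∀ᵐ x ∂μ, ∃ k : ℤ, f x = (k : ℝ))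
    (p : AddMonoidAlgebra ℤ (ℤ × ℤ)) :
    ∀ᵐ x ∂μ, ∃ k : ℤ, polyAct T p f x = (k : ℝ) := by
  induction p using AddMonoidAlgebra.induction_linear with
  | zero => exact Filter.Eventually.of_forall fun x => ⟨0, by simp [polyAct_zero]⟩
  | add a b ha hb =>
    filter_upwards [ha, hb] with x h1 h2
    obtain ⟨k, hk⟩ := h1
    obtain ⟨l, hl⟩ := h2
    exact ⟨k + l, by rw [polyAct_add, Pi.add_apply, hk, hl]; push_cast; rfl⟩
  | single g c =>
    filter_upwards [(hmp (-g)).quasiMeasurePreserving.ae hfint] with x hx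
    obtain ⟨k, hk⟩ := hx
    exact ⟨c * k, by rw [polyAct_single, hk]; push_cast; rfl⟩

theorem polyAct_mapDomain (φ : ℤ × ℤ → ℤ × ℤ) (p : AddMonoidAlgebra ℤ (ℤ × ℤ)) (f : X → ℝ)
    (x : X) : polyAct T (AddMonoidAlgebra.mapDomain φ p) f x =
      Finsupp.sum p.coeff fun g c => (c : ℝ) * f (T (-(φ g)) x) := by
  simp only [polyAct, AddMonoidAlgebra.mapDomain]
  apply Finsupp.sum_mapDomain_index
  · intro a; simp
  · intro a b c; push_cast; ring

theorem polyAct_bound_ae [MeasurableSpace X] (μ : Measure X)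
    (hmp : ∀ g, MeasurePreserving (T g) μ μ)
    (f : X → ℝ) (A : ℝ) (hA : ∀ᵐ x ∂μ, |f x| ≤ A)
    (φ : ℤ × ℤ → ℤ × ℤ) (p : AddMonoidAlgebra ℤ (ℤ × ℤ)) :
    ∀ᵐ x ∂μ, |polyAct T (AddMonoidAlgebra.mapDomain φ p) f x| ≤
      (Finsupp.sum p.coeff fun _ c => ((|c| : ℤ) : ℝ)) * A := by
  have h : ∀ᵐ x ∂μ, ∀ g, |f (T (-(φ g)) x)| ≤ A :=
    ae_all_iff.2 fun g => (hmp (-(φ g))).quasiMeasurePreserving.ae hA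
  filter_upwards [h] with x hx
  rw [polyAct_mapDomain, Finsupp.sum, Finsupp.sum, Finset.sum_mul]
  refine (Finset.abs_sum_le_sum_abs _ _).trans (Finset.sum_le_sum fun g _ => ?_)
  rw [abs_mul, Int.cast_abs]
  exact mul_le_mul_of_nonneg_left (hx g) (abs_nonneg _)

theorem pow_prime_eq_mapDomain (q : ℕ) (hq : q.Prime) (p : AddMonoidAlgebra ℤ (ℤ × ℤ)) :
    ∃ s : AddMonoidAlgebra ℤ (ℤ × ℤ),
      AddMonoidAlgebra.mapDomain (fun h : ℤ × ℤ => q • h) p = p ^ q + q • s := by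
  induction p using AddMonoidAlgebra.induction_linear with
  | zero => exact ⟨0, by simp [hq.ne_zero]⟩
  | add a b ha hb =>
    obtain ⟨s, hs⟩ := ha
    obtain ⟨t, ht⟩ := hb
    obtain ⟨w, hw⟩ := exists_add_pow_prime_eq hq a b
    refine ⟨s + t - a * b * w, ?_⟩
    rw [AddMonoidAlgebra.mapDomain_add, hs, ht, hw]
    simp only [nsmul_eq_mul]
    ring
  | single g c =>
    have := Fact.mk hq
    have h : (q : ℤ) ∣ c - c ^ q := by
      rw [← ZMod.intCast_eq_intCast_iff_dvd_sub]
      push_cast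
      exact ZMod.pow_card _
    obtain ⟨k, hk⟩ := h
    refine ⟨AddMonoidAlgebra.single (q • g) k, ?_⟩
    rw [AddMonoidAlgebra.mapDomain_single, AddMonoidAlgebra.single_pow,
      AddMonoidAlgebra.smul_single, ← AddMonoidAlgebra.single_add]
    congr 1
    rw [nsmul_eq_mul]
    linarith

end Helpers

open scoped Classical in
/-- **Proposition 3.1.** Let `f ∈ L^∞(X)` be integer-valued and `p ∈ Ann(f)`. If `n_p`
is the product of all primes less than `‖p‖·‖f‖_∞ + 1`, then `p^{(r)} ∈ Ann(f)`
whenever `r ≥ 1` and `r ≡ 1 (mod n_p)`. Here `‖p‖ = Σ |c_g|` and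
`p^{(r)} = Σ c_g u^{r·g}`. -/
theorem dilated_poly_mem_annihilator
    {X : Type*} [MeasurableSpace X] (μ : Measure X) [IsProbabilityMeasure μ]
    (T : ℤ × ℤ → X → X)
    (hmp : ∀ g, MeasurePreserving (T g) μ μ)
    (hT0 : T 0 = id)
    (hTadd : ∀ g h : ℤ × ℤ, T (g + h) = T g ∘ T h)
    (f : X → ℝ) (hfmeas : Measurable f)
    (hfbdd : MemLp f ⊤ μ)
    (hfint : ∀ᵐ x ∂μ, ∃ k : ℤ, f x = (k : ℝ))
    (p : AddMonoidAlgebra ℤ (ℤ × ℤ))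
    (hp : polyAct T p f =ᵐ[μ] (fun _ => (0 : ℝ)))
    (B : ℝ)
    (hB : B = (Finsupp.sum p.coeff fun _ c => ((|c| : ℤ) : ℝ)) * (eLpNorm f ⊤ μ).toReal + 1)
    (np : ℕ)
    (hnp : np = ∏ q ∈ (Finset.range (⌈B⌉₊ + 1)).filter
        (fun q => Nat.Prime q ∧ (q : ℝ) < B), q)
    (r : ℕ) (hr : 1 ≤ r) (hmod : r ≡ 1 [MOD np]) :
    polyAct T (AddMonoidAlgebra.mapDomain (fun h : ℤ × ℤ => r • h) p) f
      =ᵐ[μ] (fun _ => (0 : ℝ)) := by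
  classical
  set N : ℝ := Finsupp.sum p.coeff fun _ c => ((|c| : ℤ) : ℝ) with hN
  set A : ℝ := (eLpNorm f ⊤ μ).toReal with hAdef
  have hA : ∀ᵐ x ∂μ, |f x| ≤ A := by
    have h1 : ∀ᵐ x ∂μ, ‖f x‖ₑ ≤ eLpNorm f ⊤ μ := by
      rw [eLpNorm_exponent_top]
      exact ae_le_eLpNormEssSup
    filter_upwards [h1] with x hx
    have := ENNReal.toReal_mono hfbdd.eLpNorm_ne_top hx
    simpa [hAdef] using this
  have hprime : ∀ q : ℕ, q.Prime → q ∣ r → B ≤ (q : ℝ) := by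
    intro q hq hqr
    by_contra! hlt
    have hmem : q ∣ np := by
      rw [hnp]
      apply Finset.dvd_prod_of_mem (fun q => q)
      rw [Finset.mem_filter, Finset.mem_range]
      refine ⟨?_, hq, hlt⟩
      have : (q : ℝ) < (⌈B⌉₊ : ℝ) := hlt.trans_le (Nat.le_ceil B)
      have : q < ⌈B⌉₊ := by exact_mod_cast this
      omega
    have h1 : r ≡ 1 [MOD q] := hmod.of_dvd hmem
    have h2 : r ≡ 0 [MOD q] := (Nat.modEq_zero_iff_dvd).2 hqr
    have h3 : q ∣ 1 := (Nat.modEq_zero_iff_dvd).1 (h1.symm.trans h2)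
    exact hq.one_lt.ne' (Nat.dvd_one.1 h3)
  clear hmod hnp
  have key : ∀ r : ℕ, 1 ≤ r → (∀ q : ℕ, q.Prime → q ∣ r → B ≤ (q : ℝ)) →
      ∀ᵐ x ∂μ, polyAct T (AddMonoidAlgebra.mapDomain (fun h : ℤ × ℤ => r • h) p) f x = 0 := by
    intro r
    induction r using induction_on_primes with
    | zero => intro h; omega
    | one =>
      intro _ _
      filter_upwards [hp] with x hx
      rw [polyAct_mapDomain]
      simpa [polyAct] using hx
    | prime_mul q a hq ih =>
      intro h1 hd
      have ha : 1 ≤ a := by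
        rcases Nat.eq_zero_or_pos a with h | h
        · simp [h] at h1
        · exact h
      have iha := ih ha fun q' hq' hdv => hd q' hq' (hdv.mul_left q)
      have hqB := hd q hq (dvd_mul_right q a)
      obtain ⟨s, hs⟩ := pow_prime_eq_mapDomain q hq
        (AddMonoidAlgebra.mapDomain (fun h : ℤ × ℤ => a • h) p)
      have hcomp : AddMonoidAlgebra.mapDomain (fun h : ℤ × ℤ => (q * a) • h) p =
          AddMonoidAlgebra.mapDomain (fun h : ℤ × ℤ => q • h)
            (AddMonoidAlgebra.mapDomain (fun h : ℤ × ℤ => a • h) p) := by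
        simp only [AddMonoidAlgebra.mapDomain, ← Finsupp.mapDomain_comp]
        congr 2
        funext h
        exact mul_nsmul' h q a
      have hpow := polyAct_mul_ae T μ hmp hTadd
        (AddMonoidAlgebra.mapDomain (fun h : ℤ × ℤ => a • h) p ^ (q - 1)) _ f iha
      rw [← pow_succ, Nat.sub_add_cancel hq.one_le] at hpow
      filter_upwards [hpow, polyAct_int_ae T μ hmp f hfint s,
        polyAct_bound_ae T μ hmp f A hA (fun h : ℤ × ℤ => (q * a) • h) p] with x hx1 hx2 hx3
      obtain ⟨k, hk⟩ := hx2
      have hval : polyAct T (AddMonoidAlgebra.mapDomain (fun h : ℤ × ℤ => (q * a) • h) p) f x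
          = (q : ℝ) * k := by
        rw [hcomp, hs, polyAct_add, Pi.add_apply, hx1, polyAct_nsmul, hk, zero_add]
      rw [hval] at hx3 ⊢
      have hlt : |(q : ℝ) * k| < q := by linarith
      have hlt' : |(q : ℤ) * k| < q := by exact_mod_cast hlt
      have := Int.eq_zero_of_abs_lt_dvd (dvd_mul_right (q : ℤ) k) hlt'
      exact_mod_cast this
  exact key r hr hprime
end

section
/- Let (X, μ) be a probability space with a measure-preserving ℤ²-action, and let f ∈ L^∞(X) be an integer-valued function with Ann(f) ≠ {0}. Then there exists a finite set Δ ⊆ ℤ² ∖ {0} such that no two elements of Δ are proportional to each other and V(Ann(f)) ⊆ K(Δ). -/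
open MeasureTheory

/-- The 2-torus `𝕋² = {(w₁,w₂) ∈ ℂ² : |w₁| = |w₂| = 1}`. -/
def torus2 : Set (ℂ × ℂ) := {w | ‖w.1‖ = 1 ∧ ‖w.2‖ = 1}

/-- The character `χ_g(w₁,w₂) = w₁^m w₂^n` for `g = (m,n) ∈ ℤ²`. -/
noncomputable def chi (g : ℤ × ℤ) (w : ℂ × ℂ) : ℂ := w.1 ^ g.1 * w.2 ^ g.2

/-- For `s = Σ c_g u^g ∈ ℤ[u₁^±, u₂^±]`, the function `s_*(w) = Σ c_g χ_g(w)`. -/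
noncomputable def polyStar (s : AddMonoidAlgebra ℤ (ℤ × ℤ)) (w : ℂ × ℂ) : ℂ :=
  Finsupp.sum s.coeff fun g c => (c : ℂ) * chi g w

/-- `Ann(f)` : Laurent polynomials annihilating `f` (μ-a.e.). -/
def annSet {X : Type*} [MeasurableSpace X] (μ : Measure X) (T : ℤ × ℤ → X → X)
    (f : X → ℝ) : Set (AddMonoidAlgebra ℤ (ℤ × ℤ)) :=
  {p | polyAct T p f =ᵐ[μ] (fun _ => (0 : ℝ))}

/-- Two elements `g, h ∈ ℤ²` are proportional if `a • g = b • h` for some nonzero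
integers `a, b`. -/
def Proportional (g h : ℤ × ℤ) : Prop :=
  ∃ a b : ℤ, a ≠ 0 ∧ b ≠ 0 ∧ a • g = b • h

open AddMonoidAlgebra in
/-- Frobenius-type congruence modulo a prime. -/
lemma aux_frob (q : ℕ) (hq : q.Prime) (p : AddMonoidAlgebra ℤ (ℤ × ℤ)) :
    ∃ s : AddMonoidAlgebra ℤ (ℤ × ℤ),
      p ^ q = mapDomain (fun g : ℤ × ℤ => q • g) p + (q : AddMonoidAlgebra ℤ (ℤ × ℤ)) * s := by
  induction p using AddMonoidAlgebra.induction_linear with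
  | zero => exact ⟨0, by simp [hq.ne_zero]⟩
  | add a b ha hb =>
    obtain ⟨s, hs⟩ := ha
    obtain ⟨t, ht⟩ := hb
    obtain ⟨r, hr⟩ := exists_add_pow_prime_eq hq a b
    refine ⟨s + t + a * b * r, ?_⟩
    rw [hr, hs, ht, mapDomain_add]
    ring
  | single g c =>
    have : (q : ℤ) ∣ c ^ q - c := by
      have := Fact.mk hq
      rw [← ZMod.intCast_zmod_eq_zero_iff_dvd]
      push_cast
      rw [ZMod.pow_card, sub_self]
    obtain ⟨t, ht⟩ := this
    refine ⟨single (q • g) t, ?_⟩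
    have e : c ^ q = c + q * t := by linarith
    rw [single_pow, mapDomain_single, e, single_add,
      ← nsmul_eq_mul q (single (q • g) t), smul_single, nsmul_eq_mul q t]

/-- The functional `p ↦ Σ c_g φ(h - g)`. -/
noncomputable def LF (φ : ℤ × ℤ → ℤ) (h : ℤ × ℤ) : AddMonoidAlgebra ℤ (ℤ × ℤ) →+ ℤ :=
  (Finsupp.liftAddHom fun g => AddMonoidHom.mulRight (φ (h - g))).comp
    AddMonoidAlgebra.coeffAddEquiv.toAddMonoidHom

lemma LF_apply (φ : ℤ × ℤ → ℤ) (h : ℤ × ℤ) (p : AddMonoidAlgebra ℤ (ℤ × ℤ)) :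
    LF φ h p = p.coeff.sum fun g c => c * φ (h - g) := rfl

lemma LF_single (φ : ℤ × ℤ → ℤ) (h g : ℤ × ℤ) (c : ℤ) :
    LF φ h (AddMonoidAlgebra.single g c) = c * φ (h - g) := by
  simp [LF_apply]

lemma LF_single_mul (φ : ℤ × ℤ → ℤ) (h g : ℤ × ℤ) (c : ℤ) (p : AddMonoidAlgebra ℤ (ℤ × ℤ)) :
    LF φ h (AddMonoidAlgebra.single g c * p) = c * LF φ (h - g) p := by
  induction p using AddMonoidAlgebra.induction_linear with
  | zero => simp
  | add a b ha hb => rw [mul_add, map_add, ha, hb, map_add, mul_add]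
  | single k d =>
    rw [AddMonoidAlgebra.single_mul_single, LF_single, LF_single, sub_sub, mul_assoc]

lemma LF_mul (φ : ℤ × ℤ → ℤ) (p : AddMonoidAlgebra ℤ (ℤ × ℤ)) (hp : ∀ h, LF φ h p = 0)
    (s : AddMonoidAlgebra ℤ (ℤ × ℤ)) (h : ℤ × ℤ) : LF φ h (s * p) = 0 := by
  induction s using AddMonoidAlgebra.induction_linear with
  | zero => simp
  | add a b ha hb => rw [add_mul, map_add, ha, hb, add_zero]
  | single k d => rw [LF_single_mul, hp, mul_zero]

/-- Dilation of a Laurent polynomial. -/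
noncomputable def dil (r : ℕ) (p : AddMonoidAlgebra ℤ (ℤ × ℤ)) : AddMonoidAlgebra ℤ (ℤ × ℤ) :=
  AddMonoidAlgebra.mapDomain (fun g : ℤ × ℤ => r • g) p

lemma dil_sum {A : Type*} [CommRing A] (r : ℕ) (p : AddMonoidAlgebra ℤ (ℤ × ℤ))
    (F : ℤ × ℤ → A) :
    ((dil r p).coeff.sum fun g c => (c : A) * F g)
      = ∑ g ∈ p.coeff.support, (p.coeff g : A) * F (r • g) := by
  have : (dil r p).coeff = Finsupp.mapDomain (fun g : ℤ × ℤ => r • g) p.coeff := rfl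
  rw [this, Finsupp.sum_mapDomain_index]
  · rfl
  · simp
  · intros; push_cast; ring

lemma dil_mul (q r : ℕ) (p : AddMonoidAlgebra ℤ (ℤ × ℤ)) :
    dil (q * r) p = dil q (dil r p) := by
  apply AddMonoidAlgebra.coeff_injective
  change Finsupp.mapDomain _ _ = Finsupp.mapDomain _ (Finsupp.mapDomain _ _)
  rw [← Finsupp.mapDomain_comp]
  congr 1
  funext g
  simp [mul_smul]

lemma LF_dil_bound (φ : ℤ × ℤ → ℤ) (M : ℕ) (hM : ∀ g, |φ g| ≤ M)
    (p : AddMonoidAlgebra ℤ (ℤ × ℤ)) (r : ℕ) (h : ℤ × ℤ) :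
    |LF φ h (dil r p)| ≤ ((∑ g ∈ p.coeff.support, (p.coeff g).natAbs) * M : ℕ) := by
  have := dil_sum r p (fun g => φ (h - g))
  simp only [Int.cast_id] at this
  rw [LF_apply, this]
  push_cast
  rw [Finset.sum_mul]
  refine (Finset.abs_sum_le_sum_abs _ _).trans (Finset.sum_le_sum fun g _ => ?_)
  rw [abs_mul]
  exact mul_le_mul_of_nonneg_left (hM _) (abs_nonneg _)

lemma LF_dil (φ : ℤ × ℤ → ℤ) (M : ℕ) (hM : ∀ g, |φ g| ≤ M)
    (p : AddMonoidAlgebra ℤ (ℤ × ℤ)) (hp : ∀ h, LF φ h p = 0) (r : ℕ) (hr0 : r ≠ 0)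
    (hr : ∀ q : ℕ, q.Prime → q ∣ r →
      (∑ g ∈ p.coeff.support, (p.coeff g).natAbs) * M < q) :
    ∀ h, LF φ h (dil r p) = 0 := by
  induction r using induction_on_primes with
  | zero => exact absurd rfl hr0
  | one =>
    have : dil 1 p = p := by
      apply AddMonoidAlgebra.coeff_injective
      change Finsupp.mapDomain _ _ = _
      simp only [one_smul]
      exact Finsupp.mapDomain_id
    rwa [this]
  | prime_mul q a hq ih =>
    have ih' := ih (by rintro rfl; simp at hr0) (fun q' h1 h2 => hr q' h1 (h2.mul_left _))
    intro h
    obtain ⟨s, hs⟩ := aux_frob q hq (dil a p)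
    have h1 : LF φ h (dil a p ^ q) = 0 := by
      obtain ⟨k, rfl⟩ := Nat.exists_eq_succ_of_ne_zero hq.ne_zero
      rw [pow_succ]
      exact LF_mul φ _ ih' _ _
    have h2 : (q : ℤ) ∣ LF φ h (dil (q * a) p) := by
      rw [hs, map_add, ← nsmul_eq_mul, map_nsmul] at h1
      rw [dil_mul]
      refine ⟨- LF φ h s, ?_⟩
      change LF φ h (dil q (dil a p)) + _ = 0 at h1
      rw [nsmul_eq_mul] at h1
      linarith
    refine Int.eq_zero_of_abs_lt_dvd h2 ?_
    refine (LF_dil_bound φ M hM p _ h).trans_lt ?_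
    exact_mod_cast hr q hq (dvd_mul_right _ _)

lemma vander {ι : Type*} (S : Finset ι) (a z : ι → ℂ) (hz : Set.InjOn z S)
    (h : ∀ k : ℕ, ∑ g ∈ S, a g * z g ^ k = 0) : ∀ g ∈ S, a g = 0 := by
  intro g hg
  let e := S.equivFin
  have := Matrix.eq_zero_of_forall_pow_sum_mul_pow_eq_zero
    (f := fun i => z (e.symm i)) (v := fun i => a (e.symm i))
    (fun i j hij => e.symm.injective (Subtype.ext (hz (e.symm i).2 (e.symm j).2 hij)))
    (fun k => by
      rw [Equiv.sum_comp e.symm (fun x : S => a x * z x ^ (k : ℕ))]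
      rw [Finset.sum_coe_sort S (fun x => a x * z x ^ (k : ℕ))]
      exact h k)
  simpa using congrFun this (e ⟨g, hg⟩)

lemma Proportional.symm' {g h : ℤ × ℤ} (H : Proportional g h) : Proportional h g := by
  obtain ⟨a, b, ha, hb, e⟩ := H
  exact ⟨b, a, hb, ha, e.symm⟩

lemma Proportional.trans' {g h k : ℤ × ℤ} (H : Proportional g h) (H' : Proportional h k) :
    Proportional g k := by
  obtain ⟨a, b, ha, hb, e⟩ := H
  obtain ⟨c, d, hc, hd, e'⟩ := H'
  refine ⟨c * a, b * d, mul_ne_zero hc ha, mul_ne_zero hb hd, ?_⟩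
  rw [mul_smul, e, mul_smul, ← e', smul_comm]

lemma merge (S : Finset (ℤ × ℤ)) (hS : ∀ g ∈ S, g ≠ 0) :
    ∃ Δ : Finset (ℤ × ℤ), (∀ g ∈ Δ, g ≠ (0 : ℤ × ℤ)) ∧
      (∀ g ∈ Δ, ∀ h ∈ Δ, g ≠ h → ¬ Proportional g h) ∧
      ∀ g ∈ S, ∃ h ∈ Δ, ∃ k : ℤ, h = k • g := by
  classical
  induction S using Finset.induction_on with
  | empty => exact ⟨∅, by simp, by simp, by simp⟩
  | insert g S hg ih =>
    obtain ⟨Δ, h0, hP, hD⟩ := ih fun x hx => hS x (Finset.mem_insert_of_mem hx)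
    have hg0 : g ≠ 0 := hS g (Finset.mem_insert_self _ _)
    by_cases H : ∃ h ∈ Δ, Proportional g h
    · obtain ⟨h, hh, a, b, ha, hb, e⟩ := H
      have hpr : Proportional (b • h) h := ⟨1, b, one_ne_zero, hb, by simp⟩
      refine ⟨insert (b • h) (Δ.erase h), ?_, ?_, ?_⟩
      · intro x hx
        rcases Finset.mem_insert.1 hx with rfl | hx
        · exact smul_ne_zero hb (h0 h hh)
        · exact h0 x (Finset.mem_of_mem_erase hx)
      · intro x hx y hy hxy hp
        rcases Finset.mem_insert.1 hx with rfl | hx' <;>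
          rcases Finset.mem_insert.1 hy with rfl | hy'
        · exact hxy rfl
        · obtain ⟨h1, h2⟩ := Finset.mem_erase.1 hy'
          exact hP h hh y h2 h1.symm (hpr.symm'.trans' hp)
        · obtain ⟨h1, h2⟩ := Finset.mem_erase.1 hx'
          exact hP x h2 h hh h1 (hp.trans' hpr)
        · exact hP x (Finset.mem_of_mem_erase hx') y (Finset.mem_of_mem_erase hy') hxy hp
      · intro x hx
        rcases Finset.mem_insert.1 hx with rfl | hx
        · exact ⟨b • h, Finset.mem_insert_self _ _, a, e.symm⟩
        · obtain ⟨y, hy, k, hk⟩ := hD x hx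
          by_cases hyh : y = h
          · exact ⟨b • h, Finset.mem_insert_self _ _, b * k, by rw [mul_smul, ← hk, hyh]⟩
          · exact ⟨y, Finset.mem_insert_of_mem (Finset.mem_erase.2 ⟨hyh, hy⟩), k, hk⟩
    · push Not at H
      refine ⟨insert g Δ, ?_, ?_, ?_⟩
      · intro x hx
        rcases Finset.mem_insert.1 hx with rfl | hx
        · exact hg0
        · exact h0 x hx
      · intro x hx y hy hxy hp
        rcases Finset.mem_insert.1 hx with rfl | hx' <;>
          rcases Finset.mem_insert.1 hy with rfl | hy'
        · exact hxy rfl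
        · exact H y hy' hp
        · exact H x hx' hp.symm'
        · exact hP x hx' y hy' hxy hp
      · intro x hx
        rcases Finset.mem_insert.1 hx with rfl | hx
        · exact ⟨x, Finset.mem_insert_self _ _, 1, by simp⟩
        · obtain ⟨y, hy, k, hk⟩ := hD x hx
          exact ⟨y, Finset.mem_insert_of_mem hy, k, hk⟩

lemma chi_zsmul (k : ℤ) (g : ℤ × ℤ) (w : ℂ × ℂ) : chi (k • g) w = chi g w ^ k := by
  simp only [chi, Prod.smul_fst, Prod.smul_snd, smul_eq_mul, mul_zpow, ← zpow_mul]
  rw [mul_comm k, mul_comm k]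

lemma chi_nsmul (k : ℕ) (g : ℤ × ℤ) (w : ℂ × ℂ) : chi (k • g) w = chi g w ^ k := by
  rw [← natCast_zsmul, chi_zsmul, zpow_natCast]

lemma chi_ne_zero {w : ℂ × ℂ} (hw : w ∈ torus2) (g : ℤ × ℤ) : chi g w ≠ 0 := by
  have h1 : w.1 ≠ 0 := norm_ne_zero_iff.1 (by rw [hw.1]; exact one_ne_zero)
  have h2 : w.2 ≠ 0 := norm_ne_zero_iff.1 (by rw [hw.2]; exact one_ne_zero)
  exact mul_ne_zero (zpow_ne_zero _ h1) (zpow_ne_zero _ h2)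

lemma chi_sub {w : ℂ × ℂ} (hw : w ∈ torus2) (g h : ℤ × ℤ) :
    chi (g - h) w = chi g w / chi h w := by
  have h1 : w.1 ≠ 0 := norm_ne_zero_iff.1 (by rw [hw.1]; exact one_ne_zero)
  have h2 : w.2 ≠ 0 := norm_ne_zero_iff.1 (by rw [hw.2]; exact one_ne_zero)
  simp only [chi, Prod.fst_sub, Prod.snd_sub, zpow_sub₀ h1, zpow_sub₀ h2]
  rw [div_mul_div_comm]

/-- The dilation lemma. -/
lemma dilation {X : Type*} [MeasurableSpace X] (μ : Measure X)
    (T : ℤ × ℤ → X → X)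
    (hmp : ∀ g, MeasurePreserving (T g) μ μ)
    (hT0 : T 0 = id)
    (hTadd : ∀ g h : ℤ × ℤ, T (g + h) = T g ∘ T h)
    (f : X → ℝ)
    (hfbdd : MemLp f ⊤ μ)
    (hfint : ∀ᵐ x ∂μ, ∃ k : ℤ, f x = (k : ℝ))
    (p : AddMonoidAlgebra ℤ (ℤ × ℤ)) (hp : p ∈ annSet μ T f) :
    ∃ N : ℕ, N ≠ 0 ∧ ∀ k : ℕ, dil (k * N + 1) p ∈ annSet μ T f := by
  obtain ⟨M, hM⟩ : ∃ M : ℕ, ∀ᵐ x ∂μ, |f x| ≤ M := by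
    have hlt : eLpNormEssSup f μ < ⊤ := by
      have := hfbdd.2
      rwa [eLpNorm_exponent_top] at this
    obtain ⟨M, hM⟩ := exists_nat_ge (eLpNormEssSup f μ).toReal
    refine ⟨M, ?_⟩
    filter_upwards [ae_le_eLpNormEssSup (f := f) (μ := μ)] with x hx
    have := ENNReal.toReal_mono hlt.ne hx
    rw [toReal_enorm, Real.norm_eq_abs] at this
    exact this.trans hM
  set B := (∑ g ∈ p.coeff.support, (p.coeff g).natAbs) * M with hB
  refine ⟨B.factorial, Nat.factorial_ne_zero _, fun k => ?_⟩
  have hall : ∀ᵐ x ∂μ, ∀ g : ℤ × ℤ, (∃ k : ℤ, f (T g x) = (k : ℝ)) ∧ |f (T g x)| ≤ M ∧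
      polyAct T p f (T g x) = 0 := by
    rw [ae_all_iff]
    intro g
    have hq := (hmp g).quasiMeasurePreserving
    filter_upwards [hq.ae hfint, hq.ae hM, hq.ae hp] with x h1 h2 h3
    exact ⟨h1, h2, h3⟩
  change _ =ᵐ[μ] _
  filter_upwards [hall] with x hx
  choose φ hφ using fun g => (hx g).1
  have hLF : ∀ h, LF φ h p = 0 := by
    intro h
    have := (hx h).2.2
    have e : polyAct T p f (T h x) = ((LF φ h p : ℤ) : ℝ) := by
      rw [LF_apply, polyAct, Finsupp.sum, Finsupp.sum]
      push_cast
      refine Finset.sum_congr rfl fun g _ => ?_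
      rw [← hφ, sub_eq_neg_add, hTadd]
      rfl
    rw [e] at this
    exact_mod_cast this
  have hb : ∀ g, |φ g| ≤ M := by
    intro g
    have := (hx g).2.1
    rw [hφ] at this
    exact_mod_cast this
  have key := LF_dil φ M hb p hLF (k * B.factorial + 1) (Nat.succ_ne_zero _) (by
    intro q hq hd
    by_contra hle
    push Not at hle
    have h1 : q ∣ k * B.factorial := ((Nat.dvd_factorial hq.pos hle)).mul_left _
    exact hq.one_lt.ne' (Nat.dvd_one.1 ((Nat.dvd_add_right h1).1 hd))) 0
  have e : polyAct T (dil (k * B.factorial + 1) p) f x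
      = ((LF φ 0 (dil (k * B.factorial + 1) p) : ℤ) : ℝ) := by
    rw [LF_apply, polyAct, Finsupp.sum, Finsupp.sum]
    push_cast
    refine Finset.sum_congr rfl fun g _ => ?_
    rw [← hφ, zero_sub]
  rw [e, key, Int.cast_zero]

/-- **Lemma 3.2.** Let `(X, μ)` be a probability space with a measure-preserving
`ℤ²`-action `T`, and let `f ∈ L^∞(X)` be integer-valued with `Ann(f) ≠ {0}`. Then
there is a finite set `Δ ⊆ ℤ² ∖ {0}`, no two of whose elements are proportional, such
that `V(Ann(f)) ⊆ K(Δ)`, where `V(I) = {w ∈ 𝕋² : s_*(w) = 0 for all s ∈ I}` and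
`K(Δ) = ⋃_{g ∈ Δ} ker χ_g`. -/
theorem variety_subset_union_of_kernels
    {X : Type*} [MeasurableSpace X] (μ : Measure X) [IsProbabilityMeasure μ]
    (T : ℤ × ℤ → X → X)
    (hmp : ∀ g, MeasurePreserving (T g) μ μ)
    (hT0 : T 0 = id)
    (hTadd : ∀ g h : ℤ × ℤ, T (g + h) = T g ∘ T h)
    (f : X → ℝ) (hfmeas : Measurable f)
    (hfbdd : MemLp f ⊤ μ)
    (hfint : ∀ᵐ x ∂μ, ∃ k : ℤ, f x = (k : ℝ))
    (hann : ∃ p : AddMonoidAlgebra ℤ (ℤ × ℤ), p ≠ 0 ∧ p ∈ annSet μ T f) :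
    ∃ Δ : Finset (ℤ × ℤ),
      (∀ g ∈ Δ, g ≠ (0 : ℤ × ℤ)) ∧
      (∀ g ∈ Δ, ∀ h ∈ Δ, g ≠ h → ¬ Proportional g h) ∧
      {w ∈ torus2 | ∀ s ∈ annSet μ T f, polyStar s w = 0} ⊆
        {w ∈ torus2 | ∃ g ∈ Δ, chi g w = 1} := by
  classical
  obtain ⟨p, hp0, hp⟩ := hann
  obtain ⟨N, hN, hdil⟩ := dilation μ T hmp hT0 hTadd f hfbdd hfint p hp
  obtain ⟨Δ, h0, hP, hD⟩ := merge
    ((p.coeff.support ×ˢ p.coeff.support).filter (fun x => x.1 ≠ x.2) |>.image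
      fun x => N • (x.1 - x.2)) (by
      intro g hg
      obtain ⟨x, hx, rfl⟩ := Finset.mem_image.1 hg
      exact smul_ne_zero hN (sub_ne_zero.2 (Finset.mem_filter.1 hx).2))
  refine ⟨Δ, h0, hP, ?_⟩
  rintro w ⟨hw, hV⟩
  refine ⟨hw, ?_⟩
  by_contra hcon
  push Not at hcon
  have hinj : Set.InjOn (fun g => chi g w ^ N) p.coeff.support := by
    intro g hg h hh hgh
    by_contra hne
    obtain ⟨y, hy, k, hk⟩ := hD (N • (g - h)) (Finset.mem_image.2 ⟨(g, h),
      Finset.mem_filter.2 ⟨Finset.mem_product.2 ⟨hg, hh⟩, hne⟩, rfl⟩)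
    apply hcon y hy
    have hgh' : chi g w ^ N = chi h w ^ N := hgh
    rw [hk, chi_zsmul, chi_nsmul, chi_sub hw, div_pow, hgh',
      div_self (pow_ne_zero _ (chi_ne_zero hw h)), one_zpow]
  have hz := vander p.coeff.support (fun g => (p.coeff g : ℂ) * chi g w)
    (fun g => chi g w ^ N) hinj (by
      intro k
      have := hV _ (hdil k)
      rw [polyStar, dil_sum] at this
      rw [← this]
      refine Finset.sum_congr rfl fun g _ => ?_
      rw [chi_nsmul]
      ring)
  apply hp0
  rw [← AddMonoidAlgebra.coeff_eq_zero, ← Finsupp.support_eq_empty]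
  by_contra hne
  obtain ⟨g, hg⟩ := Finset.nonempty_iff_ne_empty.2 hne
  have := hz g hg
  rcases mul_eq_zero.1 this with h | h
  · exact Finsupp.mem_support_iff.1 hg (by exact_mod_cast h)
  · exact chi_ne_zero hw g h
end

section
/- Let (X, μ) be a probability space with an ergodic measure-preserving ℤ²-action, and let A ⊆ X be measurable with Ann(1_A) ≠ {0}. Let Δ ⊆ ℤ² ∖ {0} be a finite set as in the spectral decomposition of 1_A (no two elements of Δ proportional, f₀ = 1_A − Σ_{g∈Δ} (1_A)^g periodic, and (1_A)^{lg} − (1_A)^g periodic for all l ≥ 1, g ∈ Δ). Then there exists a finite index subgroup Λ ⊆ ℤ² such that for each Λ-ergodic component μ_s of μ: the function f₀ is constant μ_s-a.e., and for every g ∈ Δ either exp(2πi·(1_A)^g) is constant μ_s-a.e., or the pushforward of μ_s under exp(2πi·(1_A)^g) is the normalized Haar measure on the unit circle 𝕋 ⊆ ℂ. -/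
open MeasureTheory

/-- The σ-algebra of measurable sets invariant under a map `S : X → X`. -/
def invSigma {X : Type*} [MeasurableSpace X] (S : X → X) : MeasurableSpace X where
  MeasurableSet' A := MeasurableSet A ∧ S ⁻¹' A = A
  measurableSet_empty := ⟨MeasurableSet.empty, by simp⟩
  measurableSet_compl A hA := ⟨hA.1.compl, by rw [Set.preimage_compl, hA.2]⟩
  measurableSet_iUnion A hA := ⟨MeasurableSet.iUnion fun i => (hA i).1, by
    rw [Set.preimage_iUnion]; exact Set.iUnion_congr fun i => (hA i).2⟩

/-- `f^g` : the projection of `f` onto the space of `T g`-invariant functions,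
realized as the conditional expectation with respect to the invariant σ-algebra. -/
noncomputable def invProj {X : Type*} [MeasurableSpace X] (μ : Measure X)
    (T : ℤ × ℤ → X → X) (f : X → ℝ) (g : ℤ × ℤ) : X → ℝ :=
  μ[f | invSigma (T g)]

/-- A function `f` is periodic if `f(g⁻¹ · x) = f(x)` μ-a.e. for every `g` in some
finite index subgroup `Λ ⊆ ℤ²`. -/
def PeriodicFun {X : Type*} [MeasurableSpace X] (μ : Measure X)
    (T : ℤ × ℤ → X → X) (f : X → ℝ) : Prop :=
  ∃ Λ : AddSubgroup (ℤ × ℤ), Λ.FiniteIndex ∧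
    ∀ g ∈ Λ, (fun x => f (T (-g) x)) =ᵐ[μ] f

/-- `Xs` is the family of `Λ`-ergodic components of `(X, μ)` for the `ℤ²`-action `T`. -/
def IsErgodicComponents {X : Type*} [MeasurableSpace X] (μ : Measure X)
    (T : ℤ × ℤ → X → X) (Λ : AddSubgroup (ℤ × ℤ)) {n : ℕ} (Xs : Fin n → Set X) : Prop :=
  (∀ i, MeasurableSet (Xs i)) ∧
  (∀ i, 0 < μ (Xs i)) ∧
  (∀ i j, i ≠ j → μ (Xs i ∩ Xs j) = 0) ∧
  μ (Set.univ \ ⋃ i, Xs i) = 0 ∧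
  (∀ i, ∀ g ∈ Λ, T g ⁻¹' Xs i =ᵐ[μ] Xs i) ∧
  (∀ i, ∀ S : Set X, MeasurableSet S → (∀ g ∈ Λ, T g ⁻¹' S =ᵐ[μ] S) →
    μ (Xs i ∩ S) = 0 ∨ μ (Xs i \ S) = 0)

/-- The normalized Haar (arclength) probability measure on the unit circle
`𝕋 ⊆ ℂ`, as a measure on `ℂ`. -/
noncomputable def circleHaar : Measure ℂ :=
  Measure.map (fun t : ℝ => Complex.exp (2 * Real.pi * Complex.I * (t : ℂ)))
    (volume.restrict (Set.Ioc (0 : ℝ) 1))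

section helpers

/-- The Laurent polynomial ring. -/
abbrev LR := AddMonoidAlgebra ℤ (ℤ × ℤ)

/-- The monomial `u^v`. -/
noncomputable def tt (v : ℤ × ℤ) : LR := AddMonoidAlgebra.single v 1

lemma tt_add (v w : ℤ × ℤ) : tt (v + w) = tt v * tt w := by
  simp [tt, AddMonoidAlgebra.single_mul_single]

lemma tt_zero : tt 0 = 1 := rfl

lemma tt_nsmul (n : ℕ) (v : ℤ × ℤ) : tt (n • v) = tt v ^ n := by
  induction n with
  | zero => simp [tt_zero]
  | succ n ih => rw [succ_nsmul, tt_add, ih, pow_succ]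

/-- Non-torsion elements of the circle. -/
def NonTors (c : UnitAddCircle) : Prop := ∀ n : ℤ, n ≠ 0 → n • c ≠ 0

lemma NonTors.zsmul {c : UnitAddCircle} (hc : NonTors c) {n : ℤ} (hn : n ≠ 0) :
    NonTors (n • c) := by
  intro m hm
  rw [smul_smul]
  exact hc _ (mul_ne_zero hm hn)

lemma pow_smul_fixed {M : Type*} [AddCommGroup M] [Module LR M] {t : LR} {G : M}
    (h : t • G = G) (n : ℕ) : t ^ n • G = G := by
  induction n with
  | zero => simp
  | succ n ih => rw [pow_succ, mul_smul, h, ih]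

lemma geom_smul_fixed {M : Type*} [AddCommGroup M] [Module LR M] {t : LR} {G : M}
    (h : t • G = G) (n : ℕ) : (∑ i ∈ Finset.range n, t ^ i) • G = (n : ℤ) • G := by
  rw [Finset.sum_smul]
  simp [pow_smul_fixed h]

lemma hilbert_zero {H : Type*} [NormedAddCommGroup H] [InnerProductSpace ℂ H] (x : H) (v : ℕ → H)
    (r : ℝ) (I : ℂ) (hr : ∀ j, ‖v j‖ = r) (ho : ∀ i j, i ≠ j → inner ℂ (v i) (v j) = 0)
    (hI : ∀ j, inner ℂ x (v j) = I) : I = 0 := by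
  by_contra hne
  have key : ∀ n : ℕ, (n : ℝ) * ‖I‖ ^ 2 ≤ ‖x‖ ^ 2 * r ^ 2 := by
    intro n
    have h1 : ‖∑ j ∈ Finset.range n, v j‖ ^ 2 = n * r ^ 2 := by
      have h2 : inner ℂ (∑ j ∈ Finset.range n, v j) (∑ j ∈ Finset.range n, v j)
          = ((n * r ^ 2 : ℝ) : ℂ) := by
        rw [sum_inner]
        simp_rw [inner_sum]
        have : ∀ i ∈ Finset.range n, ∑ j ∈ Finset.range n, inner ℂ (v i) (v j)
            = ((r ^ 2 : ℝ) : ℂ) := by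
          intro i hi
          rw [Finset.sum_eq_single i (fun j _ hj => ho i j hj.symm) (fun h => absurd hi h)]
          rw [inner_self_eq_norm_sq_to_K, hr]
          norm_cast
        rw [Finset.sum_congr rfl this]
        simp
      rw [inner_self_eq_norm_sq_to_K] at h2
      have h2' : ((‖∑ j ∈ Finset.range n, v j‖ ^ 2 : ℝ) : ℂ) = ((n * r ^ 2 : ℝ) : ℂ) := by
        rw [← h2]; push_cast; rfl
      exact Complex.ofReal_injective h2'
    have h3 : inner ℂ x (∑ j ∈ Finset.range n, v j) = n * I := by
      rw [inner_sum]; simp [hI]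
    have h4 := norm_inner_le_norm (𝕜 := ℂ) x (∑ j ∈ Finset.range n, v j)
    rw [h3] at h4
    have h5 : (n * ‖I‖) ^ 2 ≤ ‖x‖ ^ 2 * (n * r ^ 2) := by
      rw [← h1, ← mul_pow]
      have : ‖(n : ℂ) * I‖ = n * ‖I‖ := by simp
      rw [this] at h4
      exact pow_le_pow_left₀ (by positivity) h4 2
    rcases Nat.eq_zero_or_pos n with h0 | h0
    · subst h0; simp; positivity
    · have : (0 : ℝ) < n := by exact_mod_cast h0
      nlinarith
  have hp : 0 < ‖I‖ ^ 2 := by positivity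
  obtain ⟨n, hn⟩ := exists_nat_gt (‖x‖ ^ 2 * r ^ 2 / ‖I‖ ^ 2)
  rw [div_lt_iff₀ hp] at hn
  linarith [key n]

variable {X : Type*} [MeasurableSpace X] {μ : Measure X}

/-- Circle valued functions. -/
abbrev MM (μ : Measure X) := X →ₘ[μ] UnitAddCircle

lemma setIntegral_inv [IsFiniteMeasure μ] {S : X → X} (hS : MeasurePreserving S μ μ) {Y : Set X}
    (hYm : MeasurableSet Y) (hY : S ⁻¹' Y =ᵐ[μ] Y) (f : X → ℂ)
    (hf : AEStronglyMeasurable f μ) :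
    ∫ x in Y, f (S x) ∂μ = ∫ x in Y, f x ∂μ := by
  have h1 := hS.restrict_preimage hYm
  rw [Measure.restrict_congr_set hY] at h1
  have h2 := integral_map (μ := μ.restrict Y) h1.aemeasurable
    (f := f) (by rw [h1.map_eq]; exact hf.restrict)
  rw [h1.map_eq] at h2
  exact h2.symm

lemma coeFn_zsmul' (n : ℤ) (G : MM μ) : (n • G : MM μ) =ᵐ[μ] n • (G : X → UnitAddCircle) :=
  AEEqFun.coeFn_smul n G

lemma aesm_circ (F : MM μ) :
    AEStronglyMeasurable (fun x => (AddCircle.toCircle (F x) : ℂ)) μ :=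
  (continuous_subtype_val.comp AddCircle.continuous_toCircle).comp_aestronglyMeasurable
    F.aestronglyMeasurable

lemma orth [IsFiniteMeasure μ] [Module LR (MM μ)] {S : X → X} (hS : MeasurePreserving S μ μ)
    {Y : Set X} (hYm : MeasurableSet Y) (hY : S ⁻¹' Y =ᵐ[μ] Y) (v : ℤ × ℤ)
    (hU : ∀ F : MM μ, (tt v • F : MM μ) =ᵐ[μ] F ∘ S) (d : ℕ) :
    ∀ F G : MM μ, (tt v - 1) ^ (d + 1) • F = G → tt v • G = G →
      ∀ c, NonTors c → G =ᵐ[μ.restrict Y] (fun _ => c) →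
      ∫ x in Y, (AddCircle.toCircle (F x) : ℂ) ∂μ = 0 := by
  have hinv : ∀ F : MM μ, ∫ x in Y, (AddCircle.toCircle ((tt v • F : MM μ) x) : ℂ) ∂μ
      = ∫ x in Y, (AddCircle.toCircle (F x) : ℂ) ∂μ := by
    intro F
    rw [← setIntegral_inv hS hYm hY _ (aesm_circ F)]
    apply integral_congr_ae
    filter_upwards [ae_restrict_of_ae (hU F)] with x hx
    rw [hx]; rfl
  induction d with
  | zero =>
    intro F G hFG hG c hc hGc
    have h1 : tt v • F = F + G := by
      rw [← hFG, zero_add, pow_one, sub_smul, one_smul]; abel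
    have h2 := hinv F
    rw [h1] at h2
    have h3 : ∫ x in Y, (AddCircle.toCircle ((F + G : MM μ) x) : ℂ) ∂μ
        = ∫ x in Y, (AddCircle.toCircle c : ℂ) * (AddCircle.toCircle (F x) : ℂ) ∂μ := by
      apply integral_congr_ae
      filter_upwards [ae_restrict_of_ae (AEEqFun.coeFn_add F G), hGc] with x hx hx2
      rw [hx, Pi.add_apply, hx2, AddCircle.toCircle_add]
      push_cast; ring
    rw [h3, integral_const_mul] at h2
    have h4 : ((AddCircle.toCircle c : ℂ) - 1) * ∫ x in Y, (AddCircle.toCircle (F x) : ℂ) ∂μ = 0 := by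
      rw [sub_mul, h2]; ring
    rcases mul_eq_zero.1 h4 with h5 | h5
    · exfalso
      have h6 : AddCircle.toCircle c = 1 := by
        apply Subtype.ext
        simpa using sub_eq_zero.1 h5
      rw [← AddCircle.toCircle_zero (T := 1)] at h6
      exact hc 1 one_ne_zero (by rw [one_smul]; exact AddCircle.injective_toCircle one_ne_zero h6)
    · exact h5
  | succ d ih =>
    intro F G hFG hG c hc hGc
    have hm : ∀ j : ℕ, MemLp (fun x => (AddCircle.toCircle ((tt v ^ j • F : MM μ) x) : ℂ)) 2
        (μ.restrict Y) := fun j =>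
      MemLp.of_bound (aesm_circ _).restrict 1 (Filter.Eventually.of_forall fun x =>
        (Circle.norm_coe (AddCircle.toCircle ((tt v ^ j • F : MM μ) x))).le)
    have h1m : MemLp (fun _ : X => (1 : ℂ)) 2 (μ.restrict Y) := memLp_const 1
    have hin : ∀ {f g : X → ℂ} (hf : MemLp f 2 (μ.restrict Y)) (hg : MemLp g 2 (μ.restrict Y)),
        inner ℂ (hf.toLp f) (hg.toLp g) = ∫ x in Y, g x * (starRingEnd ℂ) (f x) ∂μ := by
      intro f g hf hg
      rw [L2.inner_def]
      apply integral_congr_ae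
      filter_upwards [hf.coeFn_toLp, hg.coeFn_toLp] with x h1 h2
      rw [h1, h2]; simp
    refine hilbert_zero (h1m.toLp _) (fun j => (hm j).toLp _)
      (‖(hm 0).toLp _‖) _ ?_ ?_ ?_
    · intro j
      simp only [Lp.norm_toLp]
      congr 1
      apply eLpNorm_congr_norm_ae
      exact Filter.Eventually.of_forall fun x =>
        (Circle.norm_coe (AddCircle.toCircle ((tt v ^ j • F : MM μ) x))).trans
          (Circle.norm_coe (AddCircle.toCircle ((tt v ^ 0 • F : MM μ) x))).symm
    · intro i j hij
      rw [hin]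
      have hd : ((tt v - 1) ^ (d + 1)) • (tt v ^ j • F - tt v ^ i • F) = ((j : ℤ) - i) • G := by
        rw [← sub_smul, ← mul_smul]
        have : (tt v - 1) ^ (d + 1) * (tt v ^ j - tt v ^ i) =
          ((∑ k ∈ Finset.range j, tt v ^ k) - (∑ k ∈ Finset.range i, tt v ^ k)) *
            (tt v - 1) ^ (d + 1 + 1) := by
          have e1 := mul_geom_sum (tt v) j
          have e2 := mul_geom_sum (tt v) i
          have : tt v ^ j - tt v ^ i = (tt v - 1) * ((∑ k ∈ Finset.range j, tt v ^ k) - (∑ k ∈ Finset.range i, tt v ^ k)) := by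
            rw [mul_sub, e1, e2]; ring
          rw [this]; ring
        rw [this, mul_smul, hFG, sub_smul, geom_smul_fixed hG, geom_smul_fixed hG, ← sub_smul]
      have h0 : (j : ℤ) - i ≠ 0 := by omega
      rw [← ih _ _ hd (by rw [smul_comm, hG]) _ (hc.zsmul h0) (by
        filter_upwards [ae_restrict_of_ae (coeFn_zsmul' ((j : ℤ) - i) G), hGc] with x h1 h2
        rw [h1, Pi.smul_apply, h2])]
      apply integral_congr_ae
      filter_upwards [ae_restrict_of_ae (AEEqFun.coeFn_sub (tt v ^ j • F) (tt v ^ i • F))] with x hx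
      rw [hx, Pi.sub_apply, sub_eq_add_neg, AddCircle.toCircle_add, AddCircle.toCircle_neg,
        Circle.coe_mul, Circle.coe_inv_eq_conj]
    · intro j
      rw [hin]
      simp only [map_one, mul_one]
      induction j with
      | zero => simp
      | succ j ihj => rw [pow_succ', mul_smul, hinv, ihj]

/-- `Y` is an ergodic component for `Λ`. -/
def ErgSet (μ : Measure X) (T : ℤ × ℤ → X → X) (Λ : AddSubgroup (ℤ × ℤ)) (Y : Set X) : Prop :=
  MeasurableSet Y ∧ 0 < μ Y ∧ (∀ g ∈ Λ, T g ⁻¹' Y =ᵐ[μ] Y) ∧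
  (∀ S : Set X, MeasurableSet S → (∀ g ∈ Λ, T g ⁻¹' S =ᵐ[μ] S) →
    μ (Y ∩ S) = 0 ∨ μ (Y \ S) = 0)

lemma ae_restrict_of_diff_null {Y S : Set X} (hY : MeasurableSet Y) (h : μ (Y \ S) = 0) :
    ∀ᵐ x ∂(μ.restrict Y), x ∈ S := by
  rw [ae_restrict_iff' hY, ae_iff]
  convert h using 2
  ext x; simp

lemma ae_restrict_of_inter_null {Y S : Set X} (hY : MeasurableSet Y) (h : μ (Y ∩ S) = 0) :
    ∀ᵐ x ∂(μ.restrict Y), x ∉ S := by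
  rw [ae_restrict_iff' hY, ae_iff]
  convert h using 2
  ext x; simp

lemma preimage_inv_of_ae {β : Type*} {f : X → β} {S : X → X} (h : (fun x => f (S x)) =ᵐ[μ] f)
    (V : Set β) : S ⁻¹' (f ⁻¹' V) =ᵐ[μ] f ⁻¹' V := by
  filter_upwards [h] with x hx
  apply propext
  change f (S x) ∈ V ↔ f x ∈ V
  rw [hx]

lemma const_on {β : Type*} [MeasurableSpace β] [MeasurableSpace.CountablySeparated β] [Nonempty β]
    {T : ℤ × ℤ → X → X} {Λ : AddSubgroup (ℤ × ℤ)} {Y : Set X} (hY : ErgSet μ T Λ Y)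
    {f : X → β} (hf : Measurable f) (hinv : ∀ g ∈ Λ, (fun x => f (T g x)) =ᵐ[μ] f) :
    ∃ c, f =ᵐ[μ.restrict Y] fun _ => c := by
  refine Filter.exists_eventuallyEq_const_of_forall_separating MeasurableSet ?_
  intro U hU
  rcases hY.2.2.2 (f ⁻¹' U) (hf hU) (fun g hg => preimage_inv_of_ae (hinv g hg) U) with h | h
  · exact Or.inr (ae_restrict_of_inter_null hY.1 h)
  · exact Or.inl (ae_restrict_of_diff_null hY.1 h)

lemma index_bound [IsProbabilityMeasure μ] {T : ℤ × ℤ → X → X}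
    (hmp : ∀ g, MeasurePreserving (T g) μ μ)
    (hT0 : T 0 = id)
    (hTadd : ∀ g h : ℤ × ℤ, T (g + h) = T g ∘ T h)
    (herg : ∀ S : Set X, MeasurableSet S → (∀ g : ℤ × ℤ, T g ⁻¹' S =ᵐ[μ] S) →
      μ S = 0 ∨ μ S = 1)
    (Λ : AddSubgroup (ℤ × ℤ)) [Λ.FiniteIndex] (S : Set X) (hS : MeasurableSet S)
    (hinv : ∀ g ∈ Λ, T g ⁻¹' S =ᵐ[μ] S) (h0 : μ S ≠ 0) : 1 ≤ (Λ.index : ENNReal) * μ S := by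
  set W : Set X := ⋃ w : ℤ × ℤ, T w ⁻¹' S with hW
  have hWm : MeasurableSet W := MeasurableSet.iUnion fun w => (hmp w).measurable hS
  have hSW : S ⊆ W := by
    intro x hx
    refine Set.mem_iUnion.2 ⟨0, ?_⟩
    rw [hT0]; exact hx
  have hW1 : μ W = 1 := by
    refine (herg W hWm ?_).resolve_left ?_
    · intro g
      suffices hh : T g ⁻¹' W = W by
        rw [hh]; exact Filter.EventuallyEq.rfl
      rw [hW, Set.preimage_iUnion]
      ext x
      simp only [Set.mem_preimage, Set.mem_iUnion]
      constructor
      · rintro ⟨w, hw⟩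
        exact ⟨w + g, by rw [hTadd]; exact hw⟩
      · rintro ⟨w, hw⟩
        refine ⟨w - g, ?_⟩
        have := hTadd (w - g) g
        rw [sub_add_cancel] at this
        rw [this] at hw
        exact hw
    · intro h
      exact h0 (measure_mono_null hSW h)
  have : Fintype ((ℤ × ℤ) ⧸ Λ) := Fintype.ofFinite _
  have hle : W ≤ᵐ[μ] ⋃ q : (ℤ × ℤ) ⧸ Λ, T q.out ⁻¹' S := by
    have : ∀ w : ℤ × ℤ, T w ⁻¹' S =ᵐ[μ] T ((w : (ℤ × ℤ) ⧸ Λ).out) ⁻¹' S := by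
      intro w
      set o := ((w : (ℤ × ℤ) ⧸ Λ).out) with ho
      have hmem : w - o ∈ Λ := by
        have : (o : (ℤ × ℤ) ⧸ Λ) = w := Quotient.out_eq' _
        rw [QuotientAddGroup.eq] at this
        rwa [sub_eq_neg_add]
      have h1 : T w = T (w - o) ∘ T o := by rw [← hTadd, sub_add_cancel]
      rw [h1, Set.preimage_comp]
      exact (hmp o).quasiMeasurePreserving.preimage_ae_eq (hinv _ hmem)
    have h2 := ae_all_iff.2 this
    filter_upwards [h2] with x hx hxW
    obtain ⟨w, hw⟩ := Set.mem_iUnion.1 hxW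
    refine Set.mem_iUnion.2 ⟨(w : (ℤ × ℤ) ⧸ Λ), ?_⟩
    have := hx w
    exact (this.symm ▸ hw : (T ((w : (ℤ × ℤ) ⧸ Λ).out) ⁻¹' S) x)
  calc 1 = μ W := hW1.symm
    _ ≤ μ (⋃ q : (ℤ × ℤ) ⧸ Λ, T q.out ⁻¹' S) := measure_mono_ae hle
    _ ≤ ∑ q : (ℤ × ℤ) ⧸ Λ, μ (T q.out ⁻¹' S) := measure_iUnion_fintype_le _ _
    _ = (Λ.index : ENNReal) * μ S := by
      simp only [(hmp _).measure_preimage hS.nullMeasurableSet]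
      rw [Finset.sum_const, nsmul_eq_mul, Finset.card_univ, AddSubgroup.index_eq_card,
        Nat.card_eq_fintype_card]

lemma comps_aux [IsFiniteMeasure μ] {T : ℤ × ℤ → X → X} (Λ : AddSubgroup (ℤ × ℤ)) (δ : ENNReal)
    (hbd : ∀ S : Set X, MeasurableSet S → (∀ g ∈ Λ, T g ⁻¹' S =ᵐ[μ] S) → μ S ≠ 0 → δ ≤ μ S)
    (n : ℕ) : ∀ B : Set X, MeasurableSet B → (∀ g ∈ Λ, T g ⁻¹' B =ᵐ[μ] B) → μ B < n * δ →
      ∃ (ι : Type) (_ : Fintype ι) (Xs : ι → Set X), (∀ i, ErgSet μ T Λ (Xs i)) ∧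
        (∀ i, Xs i ⊆ B) ∧ (∀ i j, i ≠ j → μ (Xs i ∩ Xs j) = 0) ∧ μ (B \ ⋃ i, Xs i) = 0 := by
  induction n with
  | zero => intro B _ _ h; simp at h
  | succ n ih =>
    intro B hB hBi hlt
    by_cases h0 : μ B = 0
    · exact ⟨Empty, inferInstance, fun e => e.elim, fun e => e.elim, fun e => e.elim,
        fun e => e.elim, by simpa using h0⟩
    by_cases he : ErgSet μ T Λ B
    · exact ⟨Unit, inferInstance, fun _ => B, fun _ => he, fun _ => subset_rfl,
        fun i j hij => absurd (Subsingleton.elim i j) hij, by simp [Set.iUnion_const]⟩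
    have : ∃ S : Set X, MeasurableSet S ∧ (∀ g ∈ Λ, T g ⁻¹' S =ᵐ[μ] S) ∧ μ (B ∩ S) ≠ 0 ∧
        μ (B \ S) ≠ 0 := by
      by_contra hcon
      push Not at hcon
      refine he ⟨hB, pos_iff_ne_zero.2 h0, hBi, fun S hS hSi => ?_⟩
      by_cases h : μ (B ∩ S) = 0
      · exact Or.inl h
      · exact Or.inr (hcon S hS hSi h)
    obtain ⟨S, hS, hSi, h1, h2⟩ := this
    have i1 : ∀ g ∈ Λ, T g ⁻¹' (B ∩ S) =ᵐ[μ] (B ∩ S : Set X) := fun g hg => by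
      rw [Set.preimage_inter]; exact (hBi g hg).inter (hSi g hg)
    have i2 : ∀ g ∈ Λ, T g ⁻¹' (B \ S) =ᵐ[μ] (B \ S : Set X) := fun g hg => by
      rw [Set.preimage_sdiff]; exact (hBi g hg).diff (hSi g hg)
    have b1 := hbd _ (hB.inter hS) i1 h1
    have b2 := hbd _ (hB.diff hS) i2 h2
    have hsum := measure_inter_add_sdiff B (μ := μ) hS
    have hfin : δ ≠ ⊤ := (b1.trans_lt (measure_lt_top μ _)).ne
    rw [← hsum, Nat.cast_succ, add_mul, one_mul] at hlt
    have l1 : μ (B ∩ S) < n * δ := by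
      by_contra hc
      exact absurd hlt (not_lt.2 (add_le_add (not_lt.1 hc) b2))
    have l2 : μ (B \ S) < n * δ := by
      by_contra hc
      rw [add_comm (μ (B ∩ S))] at hlt
      exact absurd hlt (not_lt.2 (add_le_add (not_lt.1 hc) b1))
    obtain ⟨ι, _, Xs, a1, a2, a3, a4⟩ := ih _ (hB.inter hS) i1 l1
    obtain ⟨κ, _, Ys, c1, c2, c3, c4⟩ := ih _ (hB.diff hS) i2 l2
    refine ⟨ι ⊕ κ, inferInstance, Sum.elim Xs Ys, ?_, ?_, ?_, ?_⟩
    · rintro (i | i)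
      · exact a1 i
      · exact c1 i
    · rintro (i | i)
      · exact (a2 i).trans Set.inter_subset_left
      · exact (c2 i).trans Set.sdiff_subset
    · rintro (i | i) (j | j) hij
      · exact a3 i j (fun h => hij (by rw [h]))
      · refine measure_mono_null (fun x hx => ?_) (measure_empty (μ := μ))
        exact ((c2 j hx.2).2 (a2 i hx.1).2).elim
      · refine measure_mono_null (fun x hx => ?_) (measure_empty (μ := μ))
        exact ((c2 i hx.1).2 (a2 j hx.2).2).elim
      · exact c3 i j (fun h => hij (by rw [h]))
    · refine measure_mono_null ?_ (measure_union_null a4 c4)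
      intro x hx
      simp only [Set.mem_sdiff, Set.mem_iUnion, Sum.exists, Sum.elim_inl, Sum.elim_inr, not_or,
        Set.mem_union, Set.mem_inter_iff] at hx ⊢
      tauto

lemma comps [IsProbabilityMeasure μ] {T : ℤ × ℤ → X → X}
    (hmp : ∀ g, MeasurePreserving (T g) μ μ)
    (hT0 : T 0 = id)
    (hTadd : ∀ g h : ℤ × ℤ, T (g + h) = T g ∘ T h)
    (herg : ∀ S : Set X, MeasurableSet S → (∀ g : ℤ × ℤ, T g ⁻¹' S =ᵐ[μ] S) →
      μ S = 0 ∨ μ S = 1)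
    (Λ : AddSubgroup (ℤ × ℤ)) [Λ.FiniteIndex] :
    ∃ (n : ℕ) (Xs : Fin n → Set X), IsErgodicComponents μ T Λ Xs := by
  have hidx : (Λ.index : ENNReal) ≠ 0 := by
    exact_mod_cast AddSubgroup.FiniteIndex.index_ne_zero
  obtain ⟨ι, _, Xs, h1, -, h3, h4⟩ := comps_aux (μ := μ) (T := T) Λ ((Λ.index : ENNReal)⁻¹)
    (fun S hS hi h0 => by
      rw [ENNReal.inv_le_iff_le_mul (by simp) (by simp)]
      exact index_bound hmp hT0 hTadd herg Λ S hS hi h0) (Λ.index + 1) Set.univ MeasurableSet.univ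
      (fun g _ => by simp) (by
        rw [measure_univ, Nat.cast_succ, add_mul, one_mul,
          ENNReal.mul_inv_cancel hidx (ENNReal.natCast_ne_top _)]
        exact ENNReal.lt_add_right (by simp) (by simp))
  let e := Fintype.equivFin ι
  refine ⟨Fintype.card ι, Xs ∘ e.symm, fun i => (h1 _).1, fun i => (h1 _).2.1,
    fun i j hij => h3 _ _ (fun h => hij (e.symm.injective h)), ?_, fun i => (h1 _).2.2.1,
    fun i => (h1 _).2.2.2⟩
  convert h4 using 3
  exact e.symm.surjective.iUnion_comp Xs

/-- The determinant. -/
def dett (v w : ℤ × ℤ) : ℤ := v.1 * w.2 - v.2 * w.1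

lemma finiteIndex_of_smul (Λ : AddSubgroup (ℤ × ℤ)) (D : ℤ) (hD : D ≠ 0)
    (h : ∀ w : ℤ × ℤ, D • w ∈ Λ) : Λ.FiniteIndex := by
  have : NeZero D.natAbs := ⟨by simpa using hD⟩
  let φ : ℤ × ℤ →+ ZMod D.natAbs × ZMod D.natAbs :=
    (Int.castAddHom (ZMod D.natAbs)).prodMap (Int.castAddHom (ZMod D.natAbs))
  have hfi : φ.ker.FiniteIndex := inferInstance
  refine AddSubgroup.finiteIndex_of_le (H := φ.ker) ?_
  intro x hx
  have hx' : φ x = 0 := hx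
  have h1 : ((x.1 : ℤ) : ZMod D.natAbs) = 0 := congrArg Prod.fst hx'
  have h2 : ((x.2 : ℤ) : ZMod D.natAbs) = 0 := congrArg Prod.snd hx'
  rw [ZMod.intCast_zmod_eq_zero_iff_dvd, Int.natAbs_dvd] at h1 h2
  obtain ⟨a, ha⟩ := h1
  obtain ⟨b, hb⟩ := h2
  have : x = D • ((a, b) : ℤ × ℤ) := by
    ext
    · simpa using ha
    · simpa using hb
  rw [this]; exact h _

lemma finiteIndex_closure (v g : ℤ × ℤ) (h : dett v g ≠ 0) :
    (AddSubgroup.closure {v, g}).FiniteIndex := by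
  refine finiteIndex_of_smul _ _ h fun w => ?_
  have : dett v g • w = dett w g • v + dett v w • g := by
    ext <;> simp [dett] <;> ring
  rw [this]
  exact add_mem (zsmul_mem (AddSubgroup.subset_closure (by simp)) _)
    (zsmul_mem (AddSubgroup.subset_closure (by simp)) _)

/-- The stabilizer of an element of a module over the Laurent ring. -/
def stabb {M : Type*} [AddCommGroup M] [Module LR M] (G : M) : AddSubgroup (ℤ × ℤ) where
  carrier := {w | tt w • G = G}
  zero_mem' := by simp [tt_zero]
  add_mem' {a b} ha hb := by
    simp only [Set.mem_ofPred_eq] at *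
    rw [tt_add, mul_smul, hb, ha]
  neg_mem' {a} ha := by
    simp only [Set.mem_ofPred_eq] at *
    nth_rw 1 [← ha]
    rw [← mul_smul, ← tt_add]; simp [tt_zero]

lemma mem_stabb {M : Type*} [AddCommGroup M] [Module LR M] {G : M} {w : ℤ × ℤ} :
    w ∈ stabb G ↔ tt w • G = G := Iff.rfl

/-- Cutting off a function by a set. -/
noncomputable def cut (R : Set X) (hR : MeasurableSet R) (F : MM μ) : MM μ :=
  AEEqFun.mk (R.indicator F) (F.aestronglyMeasurable.indicator hR)

lemma coe_cut (R : Set X) (hR : MeasurableSet R) (F : MM μ) :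
    cut R hR F =ᵐ[μ] R.indicator F := AEEqFun.coeFn_mk _ _

lemma cut_sub (R : Set X) (hR : MeasurableSet R) (F G : MM μ) :
    cut R hR (F - G) = cut R hR F - cut R hR G := by
  apply AEEqFun.ext
  filter_upwards [coe_cut R hR (F - G), coe_cut R hR F, coe_cut R hR G, AEEqFun.coeFn_sub F G,
    AEEqFun.coeFn_sub (cut R hR F) (cut R hR G)] with x h1 h2 h3 h4 h5
  rw [h1, h5, Pi.sub_apply, h2, h3]
  by_cases hx : x ∈ R
  · simp [hx, h4]
  · simp [hx]

lemma cut_tt [Module LR (MM μ)] {T : ℤ × ℤ → X → X} (hmp : ∀ g, MeasurePreserving (T g) μ μ)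
    (hU : ∀ (v : ℤ × ℤ) (F : MM μ), (tt v • F : MM μ) =ᵐ[μ] F ∘ T v)
    (R : Set X) (hR : MeasurableSet R) (w : ℤ × ℤ) (hw : T w ⁻¹' R =ᵐ[μ] R) (F : MM μ) :
    tt w • cut R hR F = cut R hR (tt w • F) := by
  apply AEEqFun.ext
  filter_upwards [hU w (cut R hR F), (hmp w).quasiMeasurePreserving.ae (coe_cut R hR F),
    coe_cut R hR (tt w • F), hU w F, hw] with x h1 h2 h3 h4 h5
  rw [h1, h3, Function.comp_apply, h2]
  have h5' : T w x ∈ R ↔ x ∈ R := iff_of_eq h5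
  by_cases hx : x ∈ R
  · simp [hx, h5', h4]
  · simp [hx, h5']

lemma cut_pow [Module LR (MM μ)] {T : ℤ × ℤ → X → X} (hmp : ∀ g, MeasurePreserving (T g) μ μ)
    (hU : ∀ (v : ℤ × ℤ) (F : MM μ), (tt v • F : MM μ) =ᵐ[μ] F ∘ T v)
    (R : Set X) (hR : MeasurableSet R) (w : ℤ × ℤ) (hw : T w ⁻¹' R =ᵐ[μ] R) (F : MM μ) (K : ℕ) :
    (tt w - 1) ^ K • cut R hR F = cut R hR ((tt w - 1) ^ K • F) := by
  induction K with
  | zero => simp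
  | succ K ih =>
    rw [pow_succ', mul_smul, ih, mul_smul, sub_smul, sub_smul, one_smul, one_smul, cut_sub,
      cut_tt hmp hU R hR w hw]

lemma measurableSet_tors : MeasurableSet {c : UnitAddCircle | ¬ NonTors c} := by
  have : {c : UnitAddCircle | ¬ NonTors c} = ⋃ n : ℤ, {c | n ≠ 0 ∧ n • c = 0} := by
    ext c; simp [NonTors]
  rw [this]
  refine MeasurableSet.iUnion fun n => ?_
  by_cases hn : n = 0
  · simp [hn]
  · simp only [ne_eq, hn, not_false_eq_true, true_and]
    exact (isClosed_eq (continuous_const_smul n) continuous_const).measurableSet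

lemma exists_kill (c : UnitAddCircle) : ∃ m : ℕ, 0 < m ∧ (¬ NonTors c → m • c = 0) := by
  by_cases h : NonTors c
  · exact ⟨1, one_pos, fun h' => absurd h h'⟩
  · have h' := h
    simp only [NonTors] at h'
    push Not at h'
    obtain ⟨n, hn, h0⟩ := h'
    refine ⟨n.natAbs, Int.natAbs_pos.2 hn, fun _ => ?_⟩
    rcases Int.natAbs_eq n with h1 | h1
    · rw [h1, natCast_zsmul] at h0; exact h0
    · rw [h1, neg_smul, natCast_zsmul, neg_eq_zero] at h0; exact h0

lemma dett_nsmul (m : ℕ) (v g : ℤ × ℤ) : dett (m • v) g = m * dett v g := by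
  simp [dett]; ring

lemma geom_identity (v : ℤ × ℤ) (m K : ℕ) :
    (tt (m • v) - 1) ^ K = (∑ k ∈ Finset.range m, tt v ^ k) ^ K * (tt v - 1) ^ K := by
  rw [tt_nsmul, ← mul_geom_sum, mul_pow, mul_comm]

lemma geom_pow_smul {M : Type*} [AddCommGroup M] [Module LR M] {t : LR} {G : M}
    (h : t • G = G) (n K : ℕ) : (∑ i ∈ Finset.range n, t ^ i) ^ K • G = ((n : ℤ) ^ K) • G := by
  induction K with
  | zero => simp
  | succ K ih => rw [pow_succ', mul_smul, ih, smul_comm, geom_smul_fixed h, ← mul_smul, pow_succ]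

lemma mainLemma [IsProbabilityMeasure μ] [Module LR (MM μ)] {T : ℤ × ℤ → X → X}
    (hmp : ∀ g, MeasurePreserving (T g) μ μ)
    (hT0 : T 0 = id)
    (hTadd : ∀ g h : ℤ × ℤ, T (g + h) = T g ∘ T h)
    (herg : ∀ S : Set X, MeasurableSet S → (∀ g : ℤ × ℤ, T g ⁻¹' S =ᵐ[μ] S) →
      μ S = 0 ∨ μ S = 1)
    (hU : ∀ (v : ℤ × ℤ) (F : MM μ), (tt v • F : MM μ) =ᵐ[μ] F ∘ T v)
    (g : ℤ × ℤ) (K : ℕ) : ∀ (v : ℤ × ℤ) (F : MM μ), dett v g ≠ 0 → tt g • F = F →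
      (tt v - 1) ^ K • F = 0 →
      ∃ Λ : AddSubgroup (ℤ × ℤ), Λ.FiniteIndex ∧ ∀ Λ' : AddSubgroup (ℤ × ℤ), Λ'.FiniteIndex →
        Λ' ≤ Λ → ∀ Y, ErgSet μ T Λ' Y →
        (∃ c, F =ᵐ[μ.restrict Y] fun _ => c) ∨
        (∀ n : ℤ, n ≠ 0 → ∫ x in Y, (AddCircle.toCircle (n • F x) : ℂ) ∂μ = 0) := by
  induction K with
  | zero =>
    intro v F _ _ hF
    rw [pow_zero, one_smul] at hF
    subst hF
    exact ⟨⊤, inferInstance, fun _ _ _ Y _ => Or.inl ⟨0, ae_restrict_of_ae AEEqFun.coeFn_zero⟩⟩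
  | succ K ih =>
    intro v F hdet hgF hF
    set G : MM μ := (tt v - 1) ^ K • F with hG
    have hvG : tt v • G = G := by
      rw [pow_succ', mul_smul, ← hG, sub_smul, one_smul, sub_eq_zero] at hF
      exact hF
    have hgG : tt g • G = G := by rw [hG, smul_comm, hgF]
    let Λ₁ := AddSubgroup.closure {v, g}
    have hfi : Λ₁.FiniteIndex := finiteIndex_closure v g hdet
    have hstab : Λ₁ ≤ stabb G := by
      rw [AddSubgroup.closure_le]
      rintro w (rfl | rfl)
      · exact hvG
      · exact hgG
    have hGinv : ∀ w ∈ Λ₁, (fun x => G (T w x)) =ᵐ[μ] G := by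
      intro w hw
      have := hU w G
      rw [mem_stabb.1 (hstab hw)] at this
      exact this.symm
    have hGm : Measurable (G : X → UnitAddCircle) := G.measurable
    have hGconst : ∀ Λ' : AddSubgroup (ℤ × ℤ), Λ' ≤ Λ₁ → ∀ Y, ErgSet μ T Λ' Y →
        ∃ c, G =ᵐ[μ.restrict Y] fun _ => c := fun Λ' hle Y hY =>
      const_on hY hGm fun w hw => hGinv w (hle hw)
    rcases K with _ | d
    · refine ⟨Λ₁, hfi, fun Λ' _ hle Y hY => Or.inl ?_⟩
      have : G = F := by rw [hG, pow_zero, one_smul]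
      rw [← this]
      exact hGconst Λ' hle Y hY
    obtain ⟨n, Xs, hXs⟩ := comps hmp hT0 hTadd herg Λ₁
    have hXe : ∀ i, ErgSet μ T Λ₁ (Xs i) := fun i =>
      ⟨hXs.1 i, hXs.2.1 i, hXs.2.2.2.2.1 i, hXs.2.2.2.2.2 i⟩
    choose c hc using fun i => hGconst Λ₁ le_rfl (Xs i) (hXe i)
    choose m hm0 hm using fun i => exists_kill (c i)
    set P : ℕ := ∏ i, m i with hP
    have hP0 : P ≠ 0 := Finset.prod_ne_zero_iff.2 fun i _ => (hm0 i).ne'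
    set R : Set X := G ⁻¹' {c | ¬ NonTors c} with hRdef
    have hR : MeasurableSet R := hGm measurableSet_tors
    have hRinv : ∀ w ∈ Λ₁, T w ⁻¹' R =ᵐ[μ] R := fun w hw => preimage_inv_of_ae (hGinv w hw) _
    have hv1 : v ∈ Λ₁ := AddSubgroup.subset_closure (by simp)
    have hg1 : g ∈ Λ₁ := AddSubgroup.subset_closure (by simp)
    have hcover : ∀ᵐ x ∂μ, ∃ i, x ∈ Xs i := by
      rw [ae_iff]
      refine measure_mono_null ?_ hXs.2.2.2.1
      intro x hx
      simpa using hx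
    have hkill : (P : ℤ) • cut R hR G = 0 := by
      apply AEEqFun.ext
      have hc' : ∀ᵐ x ∂μ, ∀ i, x ∈ Xs i → G x = c i := by
        rw [ae_all_iff]
        intro i
        exact (ae_restrict_iff' (hXs.1 i)).1 (hc i)
      filter_upwards [coeFn_zsmul' (P : ℤ) (cut R hR G), coe_cut R hR G,
        AEEqFun.coeFn_zero (α := X) (β := UnitAddCircle) (μ := μ), hcover, hc']
        with x h1 h2 h3 h4 h5
      rw [h1, h3, Pi.smul_apply, h2]
      by_cases hx : x ∈ R
      · obtain ⟨i, hi⟩ := h4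
        have hGx := h5 i hi
        have hx' : ¬ NonTors (G x) := hx
        rw [hGx] at hx'
        have h6 := hm i hx'
        rw [Set.indicator_of_mem hx, hGx, natCast_zsmul, hP,
          ← Finset.prod_erase_mul _ _ (Finset.mem_univ i), mul_smul, h6, smul_zero]
        rfl
      · rw [Set.indicator_of_notMem hx, smul_zero]; rfl
    obtain ⟨Λ₂, hfi2, hΛ₂⟩ := ih (P • v) (cut R hR F)
      (by rw [dett_nsmul]; exact mul_ne_zero (by exact_mod_cast hP0) hdet)
      (by rw [cut_tt hmp hU R hR g (hRinv g hg1), hgF])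
      (by
        rw [geom_identity, mul_smul, cut_pow hmp hU R hR v (hRinv v hv1), ← hG,
          geom_pow_smul (by rw [cut_tt hmp hU R hR v (hRinv v hv1), hvG]), pow_succ, mul_smul,
          hkill, smul_zero])
    refine ⟨Λ₁ ⊓ Λ₂, inferInstance, fun Λ' hΛ' hle Y hY => ?_⟩
    have hle1 := hle.trans inf_le_left
    rcases hY.2.2.2 R hR (fun w hw => hRinv w (hle1 hw)) with h | h
    · right
      intro n hn
      have hn' := ae_restrict_of_inter_null hY.1 h
      obtain ⟨c, hc⟩ := hGconst Λ' hle1 Y hY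
      have hcN : NonTors c := by
        by_contra hcon
        have : ∀ᵐ x ∂(μ.restrict Y), False := by
          filter_upwards [hn', hc] with x h1 h2
          apply h1
          change ¬ NonTors (G x)
          rw [h2]; exact hcon
        rw [ae_iff] at this
        simp only [not_false_eq_true, Set.ofPred_true, Measure.restrict_apply_univ] at this
        exact hY.2.1.ne' this
      set N := Λ'.index with hN
      have hN0 : N ≠ 0 := AddSubgroup.FiniteIndex.index_ne_zero
      have hNv : N • v ∈ Λ' := AddSubgroup.nsmul_index_mem Λ' v
      have key := orth (hmp (N • v)) hY.1 (hY.2.2.1 _ hNv) (N • v) (hU _) d (n • F)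
        ((n * (N : ℤ) ^ (d + 1)) • G) (by
          rw [smul_comm, geom_identity, mul_smul, ← hG, geom_pow_smul hvG, mul_smul])
        (by rw [smul_comm, tt_nsmul, pow_smul_fixed hvG]) ((n * (N : ℤ) ^ (d + 1)) • c)
        (hcN.zsmul (by positivity)) (by
          filter_upwards [ae_restrict_of_ae (coeFn_zsmul' (n * (N : ℤ) ^ (d + 1)) G), hc]
            with x h1 h2
          rw [h1, Pi.smul_apply, h2])
      rw [← key]
      apply integral_congr_ae
      filter_upwards [ae_restrict_of_ae (coeFn_zsmul' n F)] with x h1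
      rw [h1, Pi.smul_apply]
    · have hEq : cut R hR F =ᵐ[μ.restrict Y] F := by
        filter_upwards [ae_restrict_of_diff_null hY.1 h, ae_restrict_of_ae (coe_cut R hR F)]
          with x h1 h2
        rw [h2, Set.indicator_of_mem h1]
      rcases hΛ₂ Λ' hΛ' (hle.trans inf_le_right) Y hY with ⟨c, hc⟩ | h2
      · exact Or.inl ⟨c, hEq.symm.trans hc⟩
      · right
        intro n hn
        rw [← h2 n hn]
        apply integral_congr_ae
        filter_upwards [hEq] with x hx
        rw [hx]

lemma exists_module {T : ℤ × ℤ → X → X}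
    (hmp : ∀ g, MeasurePreserving (T g) μ μ)
    (hT0 : T 0 = id)
    (hTadd : ∀ g h : ℤ × ℤ, T (g + h) = T g ∘ T h) :
    ∃ _ : Module LR (MM μ), ∀ (v : ℤ × ℤ) (F : MM μ), (tt v • F : MM μ) =ᵐ[μ] F ∘ T v := by
  let U : ℤ × ℤ → AddMonoid.End (MM μ) := fun v =>
    { toFun := fun F => F.compMeasurePreserving (T v) (hmp v)
      map_zero' := by
        apply AEEqFun.ext
        filter_upwards [AEEqFun.coeFn_compMeasurePreserving (0 : MM μ) (hmp v),
          (hmp v).quasiMeasurePreserving.ae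
            (AEEqFun.coeFn_zero (α := X) (β := UnitAddCircle) (μ := μ)),
          AEEqFun.coeFn_zero (α := X) (β := UnitAddCircle) (μ := μ)] with x h1 h2 h3
        rw [h1, h3, Function.comp_apply, h2]; rfl
      map_add' := by
        intro F G
        apply AEEqFun.ext
        filter_upwards [AEEqFun.coeFn_compMeasurePreserving (F + G : MM μ) (hmp v),
          (hmp v).quasiMeasurePreserving.ae (AEEqFun.coeFn_add F G),
          AEEqFun.coeFn_compMeasurePreserving F (hmp v),
          AEEqFun.coeFn_compMeasurePreserving G (hmp v),
          AEEqFun.coeFn_add (F.compMeasurePreserving (T v) (hmp v))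
            (G.compMeasurePreserving (T v) (hmp v))] with x h1 h2 h3 h4 h5
        rw [h1, h5, Function.comp_apply, h2, Pi.add_apply, Pi.add_apply, h3, h4]; rfl }
  have hUc : ∀ v (F : MM μ), (U v F : MM μ) =ᵐ[μ] F ∘ T v := fun v F =>
    AEEqFun.coeFn_compMeasurePreserving F (hmp v)
  let ρ₀ : Multiplicative (ℤ × ℤ) →* AddMonoid.End (MM μ) :=
    { toFun := fun v => U v.toAdd
      map_one' := by
        ext1 F
        apply AEEqFun.ext
        filter_upwards [hUc 0 F] with x h1
        change (U 0 F : MM μ) x = F x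
        rw [h1, hT0]; rfl
      map_mul' := by
        intro v w
        ext1 F
        apply AEEqFun.ext
        filter_upwards [hUc (w.toAdd + v.toAdd) F, hUc v.toAdd (U w.toAdd F),
          (hmp v.toAdd).quasiMeasurePreserving.ae (hUc w.toAdd F)] with x h1 h2 h3
        change (U (v.toAdd + w.toAdd) F : MM μ) x = (U v.toAdd (U w.toAdd F) : MM μ) x
        rw [add_comm, h1, h2, Function.comp_apply, Function.comp_apply, h3, hTadd]; rfl }
  let ρ := AddMonoidAlgebra.lift ℤ (AddMonoid.End (MM μ)) (ℤ × ℤ) ρ₀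
  refine ⟨Module.compHom (MM μ) ρ.toRingHom, fun v F => ?_⟩
  have : ρ (tt v) = U v := by
    rw [tt, AddMonoidAlgebra.lift_single, one_smul]; rfl
  change (ρ (tt v) F : MM μ) =ᵐ[μ] F ∘ T v
  rw [this]
  exact hUc v F

lemma cont_integral (ν : Measure UnitAddCircle) [IsFiniteMeasure ν] :
    Continuous fun f : C(UnitAddCircle, ℂ) => ∫ x, f x ∂ν := by
  have h1 : Continuous fun f : C(UnitAddCircle, ℂ) =>
      ∫ x, (ContinuousMap.toLp (E := ℂ) 1 ν ℂ f : UnitAddCircle → ℂ) x ∂ν :=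
    continuous_integral.comp (ContinuousMap.toLp (E := ℂ) 1 ν ℂ).continuous
  convert h1 using 2 with f
  exact (integral_congr_ae (ContinuousMap.coeFn_toLp (p := 1) (𝕜 := ℂ) ν f)).symm

lemma integral_fourier_volume (n : ℤ) (hn : n ≠ 0) :
    ∫ x : UnitAddCircle, (fourier n x : ℂ) = 0 := by
  have h := congrFun (fourierCoeff_fourier (T := 1) n) 0
  rw [Pi.single_eq_of_ne hn.symm, fourierCoeff, AddCircle.integral_haarAddCircle] at h
  simpa using h

lemma haar_of_fourier (ν : Measure UnitAddCircle) [IsProbabilityMeasure ν]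
    (h : ∀ n : ℤ, n ≠ 0 → ∫ x, (fourier n x : ℂ) ∂ν = 0) : ν = volume := by
  have hall : ∀ f : C(UnitAddCircle, ℂ), ∫ x, f x ∂ν = ∫ x, f x := by
    have hintg : ∀ (κ : Measure UnitAddCircle) [IsFiniteMeasure κ] (f : C(UnitAddCircle, ℂ)),
        Integrable f κ := fun κ _ f => f.continuous.integrable_of_hasCompactSupport
          (HasCompactSupport.of_compactSpace _)
    let W : Submodule ℂ C(UnitAddCircle, ℂ) :=
      { carrier := {f | ∫ x, f x ∂ν = ∫ x, f x}
        zero_mem' := by simp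
        add_mem' := by
          intro a b ha hb
          simp only [Set.mem_ofPred_eq, ContinuousMap.add_apply] at *
          rw [integral_add (hintg ν a) (hintg ν b), integral_add (hintg _ a) (hintg _ b), ha, hb]
        smul_mem' := by
          intro c a ha
          simp only [Set.mem_ofPred_eq, ContinuousMap.smul_apply] at *
          rw [integral_smul, integral_smul, ha] }
    have hW : IsClosed (W : Set C(UnitAddCircle, ℂ)) :=
      isClosed_eq (cont_integral ν) (cont_integral volume)
    have hle : (Submodule.span ℂ (Set.range (@fourier 1))).topologicalClosure ≤ W := by
      apply Submodule.topologicalClosure_minimal _ _ hW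
      rw [Submodule.span_le]
      rintro _ ⟨n, rfl⟩
      change ∫ x, (fourier n x : ℂ) ∂ν = ∫ x, (fourier n x : ℂ)
      by_cases hn : n = 0
      · subst hn
        simp [Measure.real, UnitAddCircle.measure_univ]
      · rw [h n hn, integral_fourier_volume n hn]
    rw [span_fourier_closure_eq_top] at hle
    exact fun f => hle (Submodule.mem_top (x := f))
  apply ext_of_forall_integral_eq_of_IsFiniteMeasure
  intro f
  have := hall ⟨fun x => (f x : ℂ), Complex.continuous_ofReal.comp f.continuous⟩
  simp only [ContinuousMap.coe_mk] at this
  rw [integral_complex_ofReal, integral_complex_ofReal] at this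
  exact Complex.ofReal_injective this

lemma exp_eq_toCircle (t : ℝ) : Complex.exp (2 * Real.pi * Complex.I * (t : ℂ)) =
    (AddCircle.toCircle (t : UnitAddCircle) : ℂ) := by
  rw [AddCircle.toCircle_apply_mk, Circle.coe_exp]
  congr 1
  push_cast; ring

lemma meas_toCircle : Measurable (fun x : UnitAddCircle => (AddCircle.toCircle x : ℂ)) :=
  (continuous_subtype_val.comp AddCircle.continuous_toCircle).measurable

lemma meas_coe : Measurable (fun t : ℝ => (t : UnitAddCircle)) :=
  (AddCircle.continuous_mk' 1).measurable

lemma circleHaar_eq :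
    circleHaar = Measure.map (fun x : UnitAddCircle => (AddCircle.toCircle x : ℂ)) volume := by
  have h := UnitAddCircle.measurePreserving_mk 0
  rw [zero_add] at h
  rw [← h.map_eq, Measure.map_map meas_toCircle h.measurable, circleHaar]
  congr 1
  funext t
  exact exp_eq_toCircle t

lemma invariant_of_meas {S : X → X} {f : X → ℝ} (hf : Measurable[invSigma S] f) (x : X) :
    f (S x) = f x := by
  have h : MeasurableSet[invSigma S] (f ⁻¹' {f x}) := hf (measurableSet_singleton _)
  have h2 : S ⁻¹' (f ⁻¹' {f x}) = f ⁻¹' {f x} := h.2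
  have h3 : x ∈ S ⁻¹' (f ⁻¹' {f x}) := by rw [h2]; rfl
  exact h3

lemma invSigma_le (S : X → X) : invSigma S ≤ (inferInstance : MeasurableSpace X) :=
  fun _ h => h.1

lemma invProj_inv (T : ℤ × ℤ → X → X) (f : X → ℝ) (g : ℤ × ℤ) (x : X) :
    invProj μ T f g (T g x) = invProj μ T f g x :=
  invariant_of_meas (S := T g) (f := invProj μ T f g) stronglyMeasurable_condExp.measurable x

lemma invProj_meas (T : ℤ × ℤ → X → X) (f : X → ℝ) (g : ℤ × ℤ) :
    Measurable (invProj μ T f g) :=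
  (stronglyMeasurable_condExp (μ := μ) (m := invSigma (T g)) (f := f)).measurable.mono
    (invSigma_le _) le_rfl

/-- Class of a real function modulo one. -/
noncomputable def cls (f : X → ℝ) (hf : Measurable f) : MM μ :=
  AEEqFun.mk (fun x => (f x : UnitAddCircle)) (meas_coe.comp hf).aestronglyMeasurable

lemma coe_cls (f : X → ℝ) (hf : Measurable f) :
    (cls f hf : MM μ) =ᵐ[μ] fun x => (f x : UnitAddCircle) := AEEqFun.coeFn_mk _ _

lemma coeFn_sum' {ι : Type*} (s : Finset ι) (F : ι → MM μ) :
    (∑ i ∈ s, F i : MM μ) =ᵐ[μ] fun x => ∑ i ∈ s, F i x := by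
  classical
  induction s using Finset.induction_on with
  | empty =>
    simp only [Finset.sum_empty]
    exact AEEqFun.coeFn_zero
  | insert a s ha ih =>
    rw [Finset.sum_insert ha]
    filter_upwards [ih, AEEqFun.coeFn_add (F a) (∑ i ∈ s, F i)] with x h1 h2
    rw [h2, Pi.add_apply, h1, Finset.sum_insert ha]

lemma kill_prod {M : Type*} [AddCommGroup M] [Module LR M] (S : Finset (ℤ × ℤ))
    (a : ℤ × ℤ → ℤ × ℤ) (v : ℤ × ℤ) (H : M) (hh : ∀ h ∈ S, tt (a h) • H = tt v • H) :
    (∏ h ∈ S, (tt (a h) - 1)) • H = (tt v - 1) ^ S.card • H := by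
  classical
  induction S using Finset.induction_on with
  | empty => simp
  | insert b s hb ih =>
    rw [Finset.prod_insert hb, Finset.card_insert_of_notMem hb, mul_smul,
      ih (fun h hs => hh h (Finset.mem_insert_of_mem hs)), smul_comm, sub_smul,
      hh b (Finset.mem_insert_self _ _), ← sub_smul, pow_succ, mul_smul]

lemma dett_ne_zero {g h : ℤ × ℤ} (hg : g ≠ 0) (hh : h ≠ 0) (hp : ¬ Proportional h g) :
    dett h g ≠ 0 := by
  intro h0
  obtain ⟨g1, g2⟩ := g
  obtain ⟨h1, h2⟩ := h
  simp only [dett] at h0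
  apply hp
  by_cases hg1 : g1 = 0
  · subst hg1
    have hg2 : g2 ≠ 0 := fun h => hg (by simp [h])
    have hh1 : h1 = 0 := by simpa [hg2] using h0
    subst hh1
    have hh2 : h2 ≠ 0 := fun h => hh (by simp [h])
    exact ⟨g2, h2, hg2, hh2, by ext <;> simp; ring⟩
  · have hh1 : h1 ≠ 0 := by
      rintro rfl
      have hh2 : h2 = 0 := by simpa [hg1] using h0
      exact hh (by simp [hh2])
    exact ⟨g1, h1, hg1, hh1, by ext <;> simp <;> linarith⟩

lemma exists_v (Δ : Finset (ℤ × ℤ)) (hΔ0 : ∀ g ∈ Δ, g ≠ (0 : ℤ × ℤ))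
    (hΔprop : ∀ g ∈ Δ, ∀ h ∈ Δ, g ≠ h → ¬ Proportional g h)
    (Λ : AddSubgroup (ℤ × ℤ)) [Λ.FiniteIndex] (g : ℤ × ℤ) (hg : g ∈ Δ) :
    ∃ v : ℤ × ℤ, dett v g ≠ 0 ∧ v ∈ Λ ∧ ∀ h ∈ Δ.erase g, ∃ b k : ℤ, v + b • g = k • h := by
  classical
  set e : ℤ × ℤ := (-g.2, g.1) with he
  have hD : dett e g ≠ 0 := by
    have : dett e g = -(g.1 ^ 2 + g.2 ^ 2) := by simp [dett, he]; ring
    rw [this]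
    intro h0
    apply hΔ0 g hg
    have h1 : g.1 = 0 := by nlinarith [sq_nonneg g.1, sq_nonneg g.2]
    have h2 : g.2 = 0 := by nlinarith [sq_nonneg g.1, sq_nonneg g.2]
    exact Prod.ext h1 h2
  set P : ℤ := ∏ h ∈ Δ.erase g, dett h g with hP
  have hP0 : P ≠ 0 := Finset.prod_ne_zero_iff.2 fun h hh =>
    dett_ne_zero (hΔ0 g hg) (hΔ0 h (Finset.mem_of_mem_erase hh))
      (hΔprop h (Finset.mem_of_mem_erase hh) g hg (Finset.ne_of_mem_erase hh))
  refine ⟨Λ.index • (P • e), ?_, AddSubgroup.nsmul_index_mem _ _, ?_⟩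
  · rw [dett_nsmul]
    refine mul_ne_zero (by exact_mod_cast AddSubgroup.FiniteIndex.index_ne_zero) ?_
    have : dett (P • e) g = P * dett e g := by simp [dett]; ring
    rw [this]
    exact mul_ne_zero hP0 hD
  · intro h hh
    have hQ := Finset.mul_prod_erase (Δ.erase g) (fun h => dett h g) hh
    set Q := ∏ x ∈ (Δ.erase g).erase h, dett x g
    rw [← hP] at hQ
    refine ⟨Λ.index * Q * dett e h, Λ.index * Q * dett e g, ?_⟩
    rw [← hQ]
    ext <;> simp [dett] <;> ring

end helpers

/-- **Lemma 4.3.** Let `(X, μ)` be ergodic, `A ⊆ X` measurable with `Ann(1_A) ≠ {0}`,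
and let `Δ` be as in the spectral decomposition of `1_A`. Then there is a finite index
subgroup `Λ ⊆ ℤ²` such that on each `Λ`-ergodic component `μ_s` : the function `f₀` is
`μ_s`-a.e. constant, and for each `g ∈ Δ`, either `exp(2πi·(1_A)^g)` is `μ_s`-a.e.
constant, or its pushforward under `μ_s` is the normalized Haar measure on `𝕋 ⊆ ℂ`. -/
theorem constants_or_haar_on_ergodic_components
    {X : Type*} [MeasurableSpace X] (μ : Measure X) [IsProbabilityMeasure μ]
    (T : ℤ × ℤ → X → X)
    (hmp : ∀ g, MeasurePreserving (T g) μ μ)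
    (hT0 : T 0 = id)
    (hTadd : ∀ g h : ℤ × ℤ, T (g + h) = T g ∘ T h)
    (herg : ∀ S : Set X, MeasurableSet S → (∀ g : ℤ × ℤ, T g ⁻¹' S =ᵐ[μ] S) →
      μ S = 0 ∨ μ S = 1)
    (A : Set X) (hA : MeasurableSet A)
    (hann : ∃ p : AddMonoidAlgebra ℤ (ℤ × ℤ), p ≠ 0 ∧
      polyAct T p (A.indicator 1) =ᵐ[μ] (fun _ => (0 : ℝ)))
    (Δ : Finset (ℤ × ℤ))
    (hΔ0 : ∀ g ∈ Δ, g ≠ (0 : ℤ × ℤ))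
    (hΔprop : ∀ g ∈ Δ, ∀ h ∈ Δ, g ≠ h → ¬ Proportional g h)
    (hf0 : PeriodicFun μ T (A.indicator 1 - ∑ g ∈ Δ, invProj μ T (A.indicator 1) g))
    (hlg : ∀ l : ℕ, 1 ≤ l → ∀ g ∈ Δ,
      PeriodicFun μ T
        (invProj μ T (A.indicator 1) (l • g) - invProj μ T (A.indicator 1) g)) :
    ∃ Λ : AddSubgroup (ℤ × ℤ), Λ.FiniteIndex ∧
      ∃ (n : ℕ) (Xs : Fin n → Set X),
        IsErgodicComponents μ T Λ Xs ∧
        ∀ i,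
          (∃ c : ℝ,
            (A.indicator 1 - ∑ g ∈ Δ, invProj μ T (A.indicator 1) g)
              =ᵐ[μ.restrict (Xs i)] fun _ => c) ∧
          ∀ g ∈ Δ,
            (∃ c : ℂ,
              (fun x => Complex.exp (2 * Real.pi * Complex.I *
                  (invProj μ T (A.indicator 1) g x : ℂ)))
                =ᵐ[μ.restrict (Xs i)] fun _ => c) ∨
            Measure.map
                (fun x => Complex.exp (2 * Real.pi * Complex.I *
                  (invProj μ T (A.indicator 1) g x : ℂ)))
                ((μ (Xs i))⁻¹ • μ.restrict (Xs i))
              = circleHaar := by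
  classical
  set f : X → ℝ := A.indicator 1 with hf
  have hfm : Measurable f := measurable_one.indicator hA
  set f₀ : X → ℝ := f - ∑ g ∈ Δ, invProj μ T f g with hf₀
  have hf₀m : Measurable f₀ :=
    hfm.sub (by
      have := Finset.measurable_sum Δ (f := fun g => invProj μ T f g)
        fun g _ => invProj_meas T f g
      convert this using 1
      funext x
      simp)
  obtain ⟨Λ₀, hΛ₀, hper⟩ := hf0
  have hper' : ∀ g ∈ Λ₀, (fun x => f₀ (T g x)) =ᵐ[μ] f₀ := by
    intro g hg
    have := hper (-g) (neg_mem hg)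
    simpa using this
  obtain ⟨inst, hU⟩ := exists_module hmp hT0 hTadd
  let F : ℤ × ℤ → MM μ := fun g => cls (invProj μ T f g) (invProj_meas T f g)
  let F₀ : MM μ := cls f₀ hf₀m
  have hsum : F₀ + ∑ g ∈ Δ, F g = 0 := by
    apply AEEqFun.ext
    have h1 : ∀ᵐ x ∂μ, ∀ g ∈ Δ, F g x = (invProj μ T f g x : UnitAddCircle) :=
      (ae_ball_iff Δ.countable_toSet).2 fun g _ => coe_cls _ _
    filter_upwards [AEEqFun.coeFn_add F₀ (∑ g ∈ Δ, F g), coeFn_sum' Δ F, h1,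
      coe_cls (μ := μ) f₀ hf₀m,
      AEEqFun.coeFn_zero (α := X) (β := UnitAddCircle) (μ := μ)] with x h1 h2 h3 h4 h5
    rw [h1, h5, Pi.add_apply, h2, h4, Finset.sum_congr rfl h3]
    have h6 : (f₀ x : UnitAddCircle) + ∑ g ∈ Δ, (invProj μ T f g x : UnitAddCircle)
        = ((f₀ x + ∑ g ∈ Δ, invProj μ T f g x : ℝ) : UnitAddCircle) := by
      rw [AddCircle.coe_add]
      congr 1
      exact (map_sum (QuotientAddGroup.mk' (AddSubgroup.zmultiples (1 : ℝ))) _ _).symm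
    have h7 : f₀ x + ∑ g ∈ Δ, invProj μ T f g x = f x := by
      rw [hf₀]; simp
    rw [h6, h7, hf]
    by_cases hx : x ∈ A
    · rw [Set.indicator_of_mem hx]
      exact AddCircle.coe_period (1 : ℝ)
    · rw [Set.indicator_of_notMem hx]; rfl
  have hFinv : ∀ g, g ∈ stabb (F g) := by
    intro g
    rw [mem_stabb]
    apply AEEqFun.ext
    filter_upwards [hU g (F g), coe_cls (μ := μ) _ (invProj_meas T f g),
      (hmp g).quasiMeasurePreserving.ae (coe_cls (μ := μ) _ (invProj_meas T f g))] with x h1 h2 h3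
    rw [h1, Function.comp_apply]
    change (cls (μ := μ) _ (invProj_meas T f g)) (T g x) = (cls (μ := μ) _ (invProj_meas T f g)) x
    rw [h3, h2, invProj_inv]
  have hF₀inv : ∀ w ∈ Λ₀, tt w • F₀ = F₀ := by
    intro w hw
    apply AEEqFun.ext
    filter_upwards [hU w F₀, coe_cls (μ := μ) _ hf₀m,
      (hmp w).quasiMeasurePreserving.ae (coe_cls (μ := μ) _ hf₀m), hper' w hw] with x h1 h2 h3 h4
    rw [h1, Function.comp_apply]
    change (cls (μ := μ) _ hf₀m) (T w x) = (cls (μ := μ) _ hf₀m) x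
    rw [h3, h2, h4]
  have hmain : ∀ g ∈ Δ, ∃ Λ : AddSubgroup (ℤ × ℤ), Λ.FiniteIndex ∧
      ∀ Λ' : AddSubgroup (ℤ × ℤ), Λ'.FiniteIndex →
        Λ' ≤ Λ → ∀ Y, ErgSet μ T Λ' Y →
        (∃ c, F g =ᵐ[μ.restrict Y] fun _ => c) ∨
        (∀ n : ℤ, n ≠ 0 → ∫ x in Y, (AddCircle.toCircle (n • F g x) : ℂ) ∂μ = 0) := by
    intro g hg
    obtain ⟨v, hv1, hv2, hv3⟩ := exists_v Δ hΔ0 hΔprop Λ₀ g hg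
    have hv3' : ∀ h, ∃ b k : ℤ, h ∈ Δ.erase g → v + b • g = k • h := by
      intro h
      by_cases hh : h ∈ Δ.erase g
      · obtain ⟨b, k, hb⟩ := hv3 h hh
        exact ⟨b, k, fun _ => hb⟩
      · exact ⟨0, 0, fun h' => absurd h' hh⟩
    choose b k hbk using hv3'
    refine mainLemma hmp hT0 hTadd herg hU g ((Δ.erase g).card + 1) v (F g) hv1 (hFinv g) ?_
    rw [pow_succ', mul_smul, ← kill_prod (Δ.erase g) (fun h => v + b h • g) v (F g) (by
      intro h _
      rw [tt_add, mul_smul, mem_stabb.1 (zsmul_mem (hFinv g) (b h))])]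
    have hFg : F g = - F₀ - ∑ h ∈ Δ.erase g, F h := by
      rw [← Finset.add_sum_erase _ _ hg] at hsum
      rw [eq_sub_iff_add_eq, eq_neg_iff_add_eq_zero, ← hsum]
      abel
    rw [hFg, smul_sub, smul_sub, smul_comm, smul_neg, sub_smul (tt v), hF₀inv v hv2, one_smul,
      sub_self, neg_zero, smul_zero, zero_sub, neg_eq_zero, Finset.smul_sum]
    rw [Finset.sum_eq_zero, smul_zero]
    intro h hh
    rw [← Finset.prod_erase_mul _ _ hh, mul_smul, hbk h hh, sub_smul,
      mem_stabb.1 (zsmul_mem (hFinv h) (k h)), one_smul, sub_self, smul_zero]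
  have hmain' : ∀ g, ∃ Λ : AddSubgroup (ℤ × ℤ), Λ.FiniteIndex ∧ (g ∈ Δ →
      ∀ Λ' : AddSubgroup (ℤ × ℤ), Λ'.FiniteIndex →
        Λ' ≤ Λ → ∀ Y, ErgSet μ T Λ' Y →
        (∃ c, F g =ᵐ[μ.restrict Y] fun _ => c) ∨
        (∀ n : ℤ, n ≠ 0 → ∫ x in Y, (AddCircle.toCircle (n • F g x) : ℂ) ∂μ = 0)) := by
    intro g
    by_cases hg : g ∈ Δ
    · obtain ⟨Λ, h1, h2⟩ := hmain g hg
      exact ⟨Λ, h1, fun _ => h2⟩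
    · exact ⟨⊤, inferInstance, fun h => absurd h hg⟩
  choose L hLfi hL using hmain'
  have hfin : ∀ s : Finset (ℤ × ℤ), ∃ Λ : AddSubgroup (ℤ × ℤ), Λ.FiniteIndex ∧ Λ ≤ Λ₀ ∧
      ∀ g ∈ s, Λ ≤ L g := by
    intro s
    induction s using Finset.induction_on with
    | empty => exact ⟨Λ₀, hΛ₀, le_rfl, by simp⟩
    | insert a s _ ih =>
      obtain ⟨Λ, h1, h2, h3⟩ := ih
      have := hLfi a
      refine ⟨Λ ⊓ L a, inferInstance, inf_le_left.trans h2, ?_⟩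
      intro g hg
      rcases Finset.mem_insert.1 hg with rfl | hg
      · exact inf_le_right
      · exact inf_le_left.trans (h3 g hg)
  obtain ⟨Λ, hΛfi, hΛ0, hΛL⟩ := hfin Δ
  obtain ⟨n, Xs, hXs⟩ := comps hmp hT0 hTadd herg Λ
  refine ⟨Λ, hΛfi, n, Xs, hXs, fun i => ?_⟩
  have hE : ErgSet μ T Λ (Xs i) := ⟨hXs.1 i, hXs.2.1 i, hXs.2.2.2.2.1 i, hXs.2.2.2.2.2 i⟩
  refine ⟨const_on hE hf₀m fun g hg => hper' g (hΛ0 hg), fun g hg => ?_⟩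
  have hcl := coe_cls (μ := μ) _ (invProj_meas (μ := μ) T f g)
  have hcl' : F g =ᵐ[μ.restrict (Xs i)] fun x => (invProj μ T f g x : UnitAddCircle) :=
    ae_restrict_of_ae hcl
  rcases hL g hg Λ hΛfi (hΛL g hg) (Xs i) hE with ⟨c, hc⟩ | h
  · left
    refine ⟨(AddCircle.toCircle c : ℂ), ?_⟩
    filter_upwards [hc, hcl'] with x h1 h2
    rw [exp_eq_toCircle, ← h2, h1]
  · right
    set κ : Measure X := (μ (Xs i))⁻¹ • μ.restrict (Xs i) with hκ
    have hκp : IsProbabilityMeasure κ := ⟨by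
      rw [hκ, Measure.smul_apply, Measure.restrict_apply_univ, smul_eq_mul]
      exact ENNReal.inv_mul_cancel hE.2.1.ne' (measure_ne_top μ _)⟩
    have hφ : Measurable fun x => (invProj μ T f g x : UnitAddCircle) :=
      meas_coe.comp (invProj_meas T f g)
    have hpm : IsProbabilityMeasure (Measure.map (fun x => (invProj μ T f g x : UnitAddCircle)) κ) :=
      Measure.isProbabilityMeasure_map hφ.aemeasurable
    have hvol := haar_of_fourier (Measure.map (fun x => (invProj μ T f g x : UnitAddCircle)) κ) (by
      intro n hn
      rw [integral_map hφ.aemeasurable (fourier n).continuous.aestronglyMeasurable, hκ,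
        integral_smul_measure]
      have h2 := h n hn
      have h3 : ∫ x in Xs i, (fourier n (invProj μ T f g x : UnitAddCircle) : ℂ) ∂μ = 0 := by
        rw [← h2]
        apply integral_congr_ae
        filter_upwards [hcl'] with x hx
        rw [hx, fourier_apply]
      rw [h3, smul_zero])
    rw [circleHaar_eq, ← hvol, Measure.map_map meas_toCircle hφ]
    congr 1
    funext x
    exact exp_eq_toCircle _
end
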